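/- Let N_T = ⌈β T^α⌉ with 1/3 < α ≤ 1 and β > 0, and suppose E[ϖ(Y₁, U^T_{1,1})⁹] < ∞ and E[γ(Y₁)⁴] < ∞. Then, under the tilted measures P̃_T, as T → ∞, T^{(α−1)/2} Z_T − (1/2) T^{(1−α)/2} β^{−1} γ² | 𝒴^T ⇒ N(0, β^{−1} γ²); that is, for every bounded continuous f : ℝ → ℝ, the P̃_T-conditional expectation Ẽ[ f( T^{(α−1)/2} Z_T − (1/2) T^{(1−α)/2} β^{−1} γ² ) | 𝒴^T ] converges in P̃_T-probability to ∫ f dN(0, β^{−1} γ²). -/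

import Mathlib

/-!
Write `a = T^((α-1)/2)`, `b = ½ T^((1-α)/2) β⁻¹ γ²` and `n = N_T`. Given the observations `y`, the
rows `(U_{t,i})_i` stay independent under the tilted measure, each with density `Ŵ_t`, so the
conditional characteristic function of `a Z_T - b` at `s` is, with `θ = s a`,
`exp(-isb) ∏ₜ E[Ŵ_t exp(iθ log Ŵ_t)] = exp(-isb) ∏ₜ E[Ŵ_t ^ (1 + iθ)]`.

The function `w ↦ w ^ (1 + iθ)` has a third-order Taylor expansion at `1` with error
`C |θ| (w - 1)^4`, uniformly on `[0, ∞)` (`taylor_twist`). The error `e = Ŵ_t - 1` of an average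
has `E e = 0`, `E e² = v / n`, `E e³ = O(n⁻²)` and `E e⁴ = O(n⁻²)` (`average_moments`), where `v` and
`m` are the second and fourth central moments of `ϖ(y_t, ·)`. Hence each factor equals
`exp(½ iθ (1 + iθ) v / n)` up to `O(|θ| (1 + m) / n²)` (`integral_twist_average`). All the factors
have modulus at most one, so the errors of the product add up, and the conditional characteristic
function is `exp(isδ - s² a δ - s² g / 2)` up to a constant times `S` (`charFun_tiltLaw_sub_le`), where
`g = 2ab = β⁻¹ γ²`, `δ = a / (2n) ∑ₜ v(y_t) - b` and `S = a / n² ∑ₜ (1 + m(y_t))`.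

By Lévy's continuity theorem the conditional law integrates `f` almost like `N(0, g)` as soon as
`S` and `δ` are small (`integral_close_of_charFun_close`). Tilting does not change the law of the
observations (`map_withDensity_fst`), so it remains to see that `S` and `δ` tend to zero in
probability for i.i.d. observations. Since `E S` is of order `T^((1-3α)/2)`, Markov's inequality
handles `S` (`tendsto_measure_remainder`). The variance of `δ` is of order `T^(-α)` and its mean,
which comes from rounding `β T^α` up to `n`, of order `T^((1-3α)/2)`, so Chebyshev's inequality
handles `δ` (`tendsto_measure_centring`). The conditional expectation itself is identified by
Bayes' formula (`condExp_withDensity`).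
-/

open MeasureTheory ProbabilityTheory Filter
open scoped ENNReal

/-- The law of a standard Gaussian random vector in `ℝ^p`. -/
noncomputable def stdGaussianPi (p : ℕ) : Measure (Fin p → ℝ) :=
  Measure.pi fun _ => gaussianReal 0 1

/-! ### Taylor expansion of `w ^ (1 + iθ)` -/

lemma hasDerivAt_ofReal_cpow' (r : ℂ) {x : ℝ} (hx : 0 < x) :
    HasDerivAt (fun y : ℝ => (y : ℂ) ^ r) (r * (x : ℂ) ^ (r - 1)) x := by
  by_cases hr : r = 0
  · subst hr
    simpa using hasDerivAt_const x (1 : ℂ)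
  · exact hasDerivAt_ofReal_cpow_const hx.ne.symm hr

/-- One integration step in the Taylor estimate around `1`. -/
lemma norm_le_of_deriv_le {g g' : ℝ → ℂ} {K : ℝ} (hK : 0 ≤ K) (n : ℕ)
    (hg : ∀ u ∈ Set.Icc (1 / 2 : ℝ) (3 / 2), HasDerivAt g (g' u) u) (h1 : g 1 = 0)
    (hb : ∀ u ∈ Set.Icc (1 / 2 : ℝ) (3 / 2), ‖g' u‖ ≤ K * |u - 1| ^ n) :
    ∀ u ∈ Set.Icc (1 / 2 : ℝ) (3 / 2), ‖g u‖ ≤ K * |u - 1| ^ (n + 1) := by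
  intro u hu
  have hsub : Set.uIcc 1 u ⊆ Set.Icc (1 / 2 : ℝ) (3 / 2) :=
    Set.uIcc_subset_Icc (by norm_num) hu
  have := (convex_uIcc (1 : ℝ) u).norm_image_sub_le_of_norm_hasDerivWithin_le
    (f := g) (f' := g') (C := K * |u - 1| ^ n)
    (fun x hx => (hg x (hsub hx)).hasDerivWithinAt)
    (fun x hx => (hb x (hsub hx)).trans (by
      have := Set.abs_sub_left_of_mem_uIcc hx
      gcongr)) Set.left_mem_uIcc Set.right_mem_uIcc
  rw [h1, sub_zero, Real.norm_eq_abs] at this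
  rw [pow_succ, ← mul_assoc]
  exact this

/-- Third-order Taylor expansion of `w ↦ w ^ (1 + iθ)` at `1`, on `[1/2, 3/2]`.  The error carries
a factor `|θ|`, because the function is affine for `θ = 0`. -/
lemma taylor_near {M θ : ℝ} (hM : |θ| ≤ M) :
    ∀ w ∈ Set.Icc (1 / 2 : ℝ) (3 / 2),
    ‖(w : ℂ) ^ (1 + Complex.I * θ) - 1 - (1 + Complex.I * θ) * (w - 1)
      - (1 + Complex.I * θ) * (Complex.I * θ) / 2 * (w - 1) ^ 2
      - (1 + Complex.I * θ) * (Complex.I * θ) * (Complex.I * θ - 1) / 6 * (w - 1) ^ 3‖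
    ≤ (8 * |θ| * (1 + M) * (1 + M) * (2 + M)) * |w - 1| ^ 4 := by
  have hM0 : 0 ≤ M := (abs_nonneg θ).trans hM
  set z : ℂ := Complex.I * θ with hz
  have hzn : ‖z‖ = |θ| := by simp [hz]
  have hzre : z.re = 0 := by simp [hz]
  set K := 8 * |θ| * (1 + M) * (1 + M) * (2 + M) with hKdef
  have hK : 0 ≤ K := by positivity
  have hpow : ∀ (r : ℂ) (u : ℝ), u ∈ Set.Icc (1 / 2 : ℝ) (3 / 2) →
      HasDerivAt (fun y : ℝ => (y : ℂ) ^ r) (r * (u : ℂ) ^ (r - 1)) u := fun r u hu =>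
    hasDerivAt_ofReal_cpow' r (by linarith [hu.1])
  have hid : ∀ u : ℝ, HasDerivAt (fun y : ℝ => (y : ℂ) - 1) 1 u := fun u =>
    (Complex.ofRealCLM.hasDerivAt (x := u)).sub_const 1
  have s3 : ∀ u ∈ Set.Icc (1 / 2 : ℝ) (3 / 2),
      ‖(1 + z) * z * (z - 1) * ((u : ℂ) ^ (z - 2) - 1)‖ ≤ K * |u - 1| ^ (0 + 1) := by
    refine norm_le_of_deriv_le (g' := fun u => (1 + z) * z * (z - 1) * ((z - 2) * (u : ℂ) ^ (z - 3)))
      hK 0 (fun u hu => ?_) (by simp) (fun u hu => ?_)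
    · have := ((hpow (z - 2) u hu).sub_const 1).const_mul ((1 + z) * z * (z - 1))
      rwa [show z - 2 - 1 = z - 3 by ring] at this
    · have hu0 : 0 < u := by linarith [hu.1]
      have e1 : ‖1 + z‖ ≤ 1 + M := (norm_add_le _ _).trans (by rw [hzn]; simpa using hM)
      have e2 : ‖z - 1‖ ≤ 1 + M := (norm_sub_le _ _).trans (by rw [hzn]; simp; linarith)
      have e3 : ‖z - 2‖ ≤ 2 + M := (norm_sub_le _ _).trans (by rw [hzn]; simp; linarith)
      have e4 : ‖(u : ℂ) ^ (z - 3)‖ ≤ 8 := by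
        rw [Complex.norm_cpow_eq_rpow_re_of_pos hu0]
        have : (z - 3).re = -3 := by simp [hzre]
        rw [this, Real.rpow_neg hu0.le]
        have h2 : (1 / 8 : ℝ) ≤ u ^ (3 : ℝ) := by
          rw [show (3 : ℝ) = ((3 : ℕ) : ℝ) by norm_num, Real.rpow_natCast]
          calc (1 / 8 : ℝ) = (1 / 2) ^ 3 := by norm_num
            _ ≤ u ^ 3 := by gcongr; exact hu.1
        exact inv_le_of_inv_le₀ (by norm_num) (by linarith)
      simp only [norm_mul, pow_zero, mul_one]
      calc ‖1 + z‖ * ‖z‖ * ‖z - 1‖ * (‖z - 2‖ * ‖(u : ℂ) ^ (z - 3)‖)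
          ≤ (1 + M) * |θ| * (1 + M) * ((2 + M) * 8) := by rw [hzn]; gcongr
        _ = K := by rw [hKdef]; ring
  have s2 : ∀ u ∈ Set.Icc (1 / 2 : ℝ) (3 / 2),
      ‖(1 + z) * z * ((u : ℂ) ^ (z - 1) - 1 - (z - 1) * (u - 1))‖ ≤ K * |u - 1| ^ (0 + 1 + 1) := by
    refine norm_le_of_deriv_le hK _ (fun u hu => ?_) (by simp) s3
    have := ((((hpow (z - 1) u hu).sub_const 1).sub ((hid u).const_mul (z - 1)))).const_mul
      ((1 + z) * z)
    refine this.congr_deriv ?_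
    rw [show z - 1 - 1 = z - 2 by ring]; ring
  have s1 : ∀ u ∈ Set.Icc (1 / 2 : ℝ) (3 / 2),
      ‖(1 + z) * ((u : ℂ) ^ z - 1 - z * (u - 1) - z * (z - 1) / 2 * (u - 1) ^ 2)‖
        ≤ K * |u - 1| ^ (0 + 1 + 1 + 1) := by
    refine norm_le_of_deriv_le hK _ (fun u hu => ?_) (by simp) s2
    have := (((((hpow z u hu).sub_const 1).sub ((hid u).const_mul z))).sub
      (((hid u).pow 2).const_mul (z * (z - 1) / 2))).const_mul (1 + z)
    refine this.congr_deriv ?_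
    push_cast
    ring
  have s0 := norm_le_of_deriv_le (g := fun w : ℝ => (w : ℂ) ^ (1 + z) - 1 - (1 + z) * (w - 1)
      - (1 + z) * z / 2 * (w - 1) ^ 2
      - (1 + z) * z * (z - 1) / 6 * (w - 1) ^ 3) hK _ (fun u hu => by
    have := ((((hpow (1 + z) u hu).sub_const 1).sub ((hid u).const_mul (1 + z))).sub
      (((hid u).pow 2).const_mul ((1 + z) * z / 2))).sub
      (((hid u).pow 3).const_mul ((1 + z) * z * (z - 1) / 6))
    refine this.congr_deriv ?_
    rw [show 1 + z - 1 = z by ring]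
    push_cast
    ring) (by simp) s1
  exact s0

/-- The function `w ↦ w ^ (1 + iθ)` on `[0, ∞)`, written as `w · exp(iθ log w)`; it is the
contribution of a weight average `w` to the characteristic function of the tilted
log-likelihood error. -/
noncomputable def twist (θ w : ℝ) : ℂ := w * Complex.exp (Complex.I * (θ * Real.log w : ℝ))

lemma norm_twist (θ : ℝ) {w : ℝ} (hw : 0 ≤ w) : ‖twist θ w‖ = w := by
  rw [twist, norm_mul, Complex.norm_exp_I_mul_ofReal, mul_one, Complex.norm_of_nonneg hw]

lemma measurable_twist (θ : ℝ) : Measurable (twist θ) := by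
  unfold twist; fun_prop

lemma twist_eq_cpow (θ : ℝ) {w : ℝ} (hw : 0 < w) :
    twist θ w = (w : ℂ) ^ (1 + Complex.I * θ) := by
  have hw' : (w : ℂ) ≠ 0 := by exact_mod_cast hw.ne'
  rw [Complex.cpow_add _ _ hw', Complex.cpow_one, Complex.cpow_def_of_ne_zero hw', twist,
    Complex.ofReal_mul, Complex.ofReal_log hw.le]
  ring_nf

/-- Global version of `taylor_near`: away from `1`, both `w log w` and the powers of `w - 1` are
`O((w - 1) ^ 4)`, and the difference `twist θ w - w` and the other terms carry a factor `|θ|`. -/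
lemma taylor_twist {M θ : ℝ} (hM : |θ| ≤ M) {w : ℝ} (hw : 0 ≤ w) :
    ‖twist θ w - 1 - (1 + Complex.I * θ) * (w - 1)
      - (1 + Complex.I * θ) * (Complex.I * θ) / 2 * (w - 1) ^ 2
      - (1 + Complex.I * θ) * (Complex.I * θ) * (Complex.I * θ - 1) / 6 * (w - 1) ^ 3‖
    ≤ (60 * (1 + M) * (1 + M) * (2 + M)) * |θ| * (w - 1) ^ 4 := by
  have hM0 : 0 ≤ M := (abs_nonneg θ).trans hM
  have h4 : |w - 1| ^ 4 = (w - 1) ^ 4 := by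
    rw [show 4 = 2 * 2 by norm_num, pow_mul, sq_abs, ← pow_mul]
  by_cases hc : |w - 1| ≤ 1 / 2
  · have hc' := abs_le.1 hc
    have hw0 : 0 < w := by linarith
    rw [twist_eq_cpow θ hw0]
    refine (taylor_near hM w ⟨by linarith, by linarith⟩).trans ?_
    rw [h4]
    have : 0 ≤ |θ| * (1 + M) * (1 + M) * (2 + M) * (w - 1) ^ 4 := by positivity
    nlinarith
  · push Not at hc
    set e := |w - 1| with he
    rw [← h4]
    have h1 : ‖twist θ w - w‖ ≤ |θ| * (52 * e ^ 4) := by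
      have : twist θ w - w = w * (Complex.exp (Complex.I * (θ * Real.log w : ℝ)) - 1) := by
        rw [twist]; ring
      rw [this, norm_mul, Complex.norm_of_nonneg hw]
      have h2 : ‖Complex.exp (Complex.I * (θ * Real.log w : ℝ)) - 1‖ ≤ |θ| * |Real.log w| := by
        refine Real.norm_exp_I_mul_ofReal_sub_one_le.trans ?_
        rw [Real.norm_eq_abs, abs_mul]
      have h3 : w * |Real.log w| ≤ 1 + w ^ 2 := by
        rcases hw.eq_or_lt with rfl | hw0
        · simp
        rcases le_total w 1 with h | h
        · have := Real.abs_log_mul_self_lt w hw0 h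
          rw [abs_mul, abs_of_pos hw0] at this
          nlinarith
        · have := Real.log_le_sub_one_of_pos hw0
          rw [abs_of_nonneg (Real.log_nonneg h)]
          nlinarith
      have h5 : 1 + w ^ 2 ≤ 52 * e ^ 4 := by
        have hw1 : w ≤ 1 + e := by linarith [le_abs_self (w - 1)]
        have hw2 : w ^ 2 ≤ (1 + e) ^ 2 := by gcongr
        have c0 : 1 / 4 ≤ e ^ 2 := by nlinarith
        have c1 : e ^ 2 ≤ 4 * e ^ 4 := by nlinarith [sq_nonneg e]
        have c2 : 1 ≤ 4 * e ^ 2 := by linarith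
        have c3 : e ≤ 2 * e ^ 2 := by nlinarith
        nlinarith
      calc w * ‖Complex.exp (Complex.I * (θ * Real.log w : ℝ)) - 1‖
          ≤ w * (|θ| * |Real.log w|) := by gcongr
        _ = |θ| * (w * |Real.log w|) := by ring
        _ ≤ |θ| * (52 * e ^ 4) := mul_le_mul_of_nonneg_left (h3.trans h5) (abs_nonneg _)
    set z : ℂ := Complex.I * θ with hz
    have hzn : ‖z‖ = |θ| := by simp [hz]
    have e1 : ‖1 + z‖ ≤ 1 + M := (norm_add_le _ _).trans (by rw [hzn]; simpa using hM)
    have e2 : ‖z - 1‖ ≤ 1 + M := (norm_sub_le _ _).trans (by rw [hzn]; simp; linarith)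
    have hwn : ‖(w : ℂ) - 1‖ = e := by
      rw [he, ← Complex.ofReal_one, ← Complex.ofReal_sub, Complex.norm_real, Real.norm_eq_abs]
    have h6 : ‖z * ((w - 1) + (1 + z) / 2 * (w - 1) ^ 2
        + (1 + z) * (z - 1) / 6 * (w - 1) ^ 3)‖ ≤ |θ| * ((1 + M) * (1 + M) * (11 * e ^ 4)) := by
      rw [norm_mul, hzn]
      gcongr
      calc ‖((w : ℂ) - 1) + (1 + z) / 2 * (w - 1) ^ 2 + (1 + z) * (z - 1) / 6 * (w - 1) ^ 3‖
          ≤ ‖(w : ℂ) - 1‖ + ‖(1 + z) / 2 * (w - 1) ^ 2‖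
            + ‖(1 + z) * (z - 1) / 6 * (w - 1) ^ 3‖ := norm_add₃_le
        _ = e + ‖1 + z‖ / 2 * e ^ 2 + ‖1 + z‖ * ‖z - 1‖ / 6 * e ^ 3 := by
          simp only [norm_mul, norm_div, norm_pow, hwn, Complex.norm_ofNat]
        _ ≤ e + (1 + M) / 2 * e ^ 2 + (1 + M) * (1 + M) / 6 * e ^ 3 := by gcongr
        _ ≤ (1 + M) * (1 + M) * (8 * e ^ 4) + (1 + M) * (1 + M) * (2 * e ^ 4)
            + (1 + M) * (1 + M) * (1 / 3 * e ^ 4) := by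
          have b1 : 1 ≤ (1 + M) * (1 + M) := by nlinarith
          have b2 : 1 + M ≤ (1 + M) * (1 + M) := by nlinarith
          have c1 : e ≤ 8 * e ^ 4 := by
            have : 1 / 8 ≤ e ^ 3 := by
              calc (1 / 8 : ℝ) = (1 / 2) ^ 3 := by norm_num
                _ ≤ e ^ 3 := by gcongr
            nlinarith
          have c2 : e ^ 2 ≤ 4 * e ^ 4 := by nlinarith [sq_nonneg e]
          have c3 : e ^ 3 ≤ 2 * e ^ 4 := by
            have : 0 ≤ e ^ 3 := by positivity
            nlinarith
          gcongr ?_ + ?_ + ?_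
          · exact c1.trans (le_mul_of_one_le_left (by positivity) b1)
          · calc (1 + M) / 2 * e ^ 2 ≤ ((1 + M) * (1 + M)) / 2 * (4 * e ^ 4) := by gcongr
              _ = _ := by ring
          · calc (1 + M) * (1 + M) / 6 * e ^ 3 ≤ (1 + M) * (1 + M) / 6 * (2 * e ^ 4) := by gcongr
              _ = _ := by ring
        _ ≤ (1 + M) * (1 + M) * (11 * e ^ 4) := by
          have : 0 ≤ (1 + M) * (1 + M) * e ^ 4 := by positivity
          nlinarith
    have hsplit : twist θ w - 1 - (1 + z) * (w - 1) - (1 + z) * z / 2 * (w - 1) ^ 2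
        - (1 + z) * z * (z - 1) / 6 * (w - 1) ^ 3
        = (twist θ w - w) - z * ((w - 1) + (1 + z) / 2 * (w - 1) ^ 2
          + (1 + z) * (z - 1) / 6 * (w - 1) ^ 3) := by ring
    rw [hsplit]
    refine (norm_sub_le _ _).trans ((add_le_add h1 h6).trans ?_)
    have d1 : 0 ≤ |θ| * e ^ 4 := by positivity
    have d2 : 52 + (1 + M) * (1 + M) * 11 ≤ 60 * (1 + M) * (1 + M) * (2 + M) := by
      nlinarith [mul_nonneg hM0 hM0, mul_nonneg (mul_nonneg hM0 hM0) hM0]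
    calc |θ| * (52 * e ^ 4) + |θ| * ((1 + M) * (1 + M) * (11 * e ^ 4))
        = (52 + (1 + M) * (1 + M) * 11) * (|θ| * e ^ 4) := by ring
      _ ≤ (60 * (1 + M) * (1 + M) * (2 + M)) * (|θ| * e ^ 4) := by gcongr
      _ = _ := by ring

/-! ### Moments of averages and one tilted log-weight -/

lemma integrable_pow_of_memLp_four {Ω : Type*} [MeasurableSpace Ω] {ν : Measure Ω}
    [IsProbabilityMeasure ν] {X : Ω → ℝ} (hX : MemLp X 4 ν) {k : ℕ} (hk : k ≤ 4) :
    Integrable (fun ω => X ω ^ k) ν := by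
  have h : MemLp X (k : ℝ≥0∞) ν := hX.mono_exponent (by exact_mod_cast hk)
  have h2 := h.integrable_norm_pow'
  refine h2.mono (hX.aestronglyMeasurable.pow k) (ae_of_all _ fun ω => ?_)
  simp

/-- A consequence of `Var (X ^ 2) ≥ 0`. -/
lemma sq_second_moment_le {Ω : Type*} [MeasurableSpace Ω] {ν : Measure Ω}
    [IsProbabilityMeasure ν] {X : Ω → ℝ} (hX : MemLp X 4 ν) :
    (∫ ω, X ω ^ 2 ∂ν) ^ 2 ≤ ∫ ω, X ω ^ 4 ∂ν := by
  set v := ∫ ω, X ω ^ 2 ∂ν with hv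
  have a4 := integrable_pow_of_memLp_four hX (k := 4) le_rfl
  have a2 := integrable_pow_of_memLp_four hX (k := 2) (by norm_num)
  have : 0 ≤ ∫ ω, (X ω ^ 2 - v) ^ 2 ∂ν := integral_nonneg fun u => sq_nonneg _
  have e2 : ∀ ω, (X ω ^ 2 - v) ^ 2 = X ω ^ 4 + ((-2 * v) * X ω ^ 2 + v ^ 2) :=
    fun u => by ring
  simp only [e2] at this
  rw [integral_add a4 ((a2.const_mul _).fun_add (integrable_const _)),
    integral_add (a2.const_mul _) (integrable_const _), integral_const_mul, ← hv] at this
  simp at this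
  nlinarith

/-- The moments up to order three, and a bound on the fourth one, of a sum of independent centred
variables with common second, third and fourth moments. -/
lemma sum_moments {Ω ι : Type*} [MeasurableSpace Ω] {ν : Measure Ω} [IsProbabilityMeasure ν]
    {X : ι → Ω → ℝ} (hind : iIndepFun X ν) (hmeas : ∀ i, Measurable (X i))
    (hL : ∀ i, MemLp (X i) 4 ν) {v k m : ℝ} (h1 : ∀ i, ∫ ω, X i ω ∂ν = 0)
    (h2 : ∀ i, ∫ ω, X i ω ^ 2 ∂ν = v) (h3 : ∀ i, ∫ ω, X i ω ^ 3 ∂ν = k)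
    (h4 : ∀ i, ∫ ω, X i ω ^ 4 ∂ν = m) (s : Finset ι) :
    MemLp (fun ω => ∑ i ∈ s, X i ω) 4 ν ∧ ∫ ω, (∑ i ∈ s, X i ω) ∂ν = 0 ∧
    ∫ ω, (∑ i ∈ s, X i ω) ^ 2 ∂ν = s.card * v ∧ ∫ ω, (∑ i ∈ s, X i ω) ^ 3 ∂ν = s.card * k ∧
    ∫ ω, (∑ i ∈ s, X i ω) ^ 4 ∂ν ≤ s.card * m + 3 * s.card ^ 2 * v ^ 2 := by
  classical
  induction s using Finset.induction_on with
  | empty => simp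
  | insert a s ha ih =>
    obtain ⟨iL, i1, i2, i3, i4⟩ := ih
    set S : Ω → ℝ := fun ω => ∑ i ∈ s, X i ω with hS
    have hSX : IndepFun S (X a) ν := by
      have := hind.indepFun_finsetSum_of_notMem hmeas ha
      rwa [show (∑ j ∈ s, X j) = S from by ext ω; simp [hS]] at this
    have hins : ∀ ω, ∑ i ∈ insert a s, X i ω = S ω + X a ω := fun ω => by
      rw [Finset.sum_insert ha, add_comm]
    simp only [hins, Finset.card_insert_of_notMem ha]
    have iS : ∀ j ≤ 4, Integrable (fun ω => S ω ^ j) ν := fun j hj =>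
      integrable_pow_of_memLp_four iL hj
    have iX : ∀ j ≤ 4, Integrable (fun ω => X a ω ^ j) ν := fun j hj =>
      integrable_pow_of_memLp_four (hL a) hj
    have iSX : ∀ j ≤ 4, ∀ l ≤ 4, Integrable (fun ω => S ω ^ j * X a ω ^ l) ν := fun j hj l hl =>
      (hSX.comp (φ := fun x => x ^ j) (ψ := fun x => x ^ l) (by fun_prop)
        (by fun_prop)).integrable_mul (iS j hj) (iX l hl)
    have eSX : ∀ j ≤ 4, ∀ l ≤ 4, ∫ ω, S ω ^ j * X a ω ^ l ∂ν
        = (∫ ω, S ω ^ j ∂ν) * ∫ ω, X a ω ^ l ∂ν := fun j hj l hl =>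
      (hSX.comp (φ := fun x => x ^ j) (ψ := fun x => x ^ l) (by fun_prop)
        (by fun_prop)).integral_fun_mul_eq_mul_integral (iS j hj).aestronglyMeasurable
          (iX l hl).aestronglyMeasurable
    have i1' : ∫ ω, S ω ^ 1 ∂ν = 0 := by simpa using i1
    have h1' : ∫ ω, X a ω ^ 1 ∂ν = 0 := by simpa using h1 a
    refine ⟨iL.add (hL a), ?_, ?_, ?_, ?_⟩
    · rw [integral_add (by simpa using iS 1 (by norm_num)) (by simpa using iX 1 (by norm_num)), i1,
        h1 a, add_zero]
    · have : ∀ ω, (S ω + X a ω) ^ 2 = S ω ^ 2 + (2 * (S ω ^ 1 * X a ω ^ 1) + X a ω ^ 2) :=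
        fun ω => by ring
      simp only [this]
      rw [integral_add (iS 2 (by norm_num))
          (((iSX 1 (by norm_num) 1 (by norm_num)).const_mul 2).fun_add (iX 2 (by norm_num))),
        integral_add ((iSX 1 (by norm_num) 1 (by norm_num)).const_mul 2) (iX 2 (by norm_num)),
        integral_const_mul, eSX 1 (by norm_num) 1 (by norm_num), i2, h2, i1']
      push_cast; ring
    · have : ∀ ω, (S ω + X a ω) ^ 3 = S ω ^ 3 + (3 * (S ω ^ 2 * X a ω ^ 1)
          + (3 * (S ω ^ 1 * X a ω ^ 2) + X a ω ^ 3)) := fun ω => by ring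
      simp only [this]
      have j1 := (iSX 2 (by norm_num) 1 (by norm_num)).const_mul 3
      have j2 := (iSX 1 (by norm_num) 2 (by norm_num)).const_mul 3
      have j3 := iX 3 (by norm_num)
      rw [integral_add (iS 3 (by norm_num)) (j1.fun_add (j2.fun_add j3)), integral_add j1 (j2.fun_add j3),
        integral_add j2 j3, integral_const_mul, integral_const_mul,
        eSX 2 (by norm_num) 1 (by norm_num), eSX 1 (by norm_num) 2 (by norm_num), i3, h3, i1', h1']
      push_cast; ring
    · have : ∀ ω, (S ω + X a ω) ^ 4 = S ω ^ 4 + (4 * (S ω ^ 3 * X a ω ^ 1)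
          + (6 * (S ω ^ 2 * X a ω ^ 2) + (4 * (S ω ^ 1 * X a ω ^ 3) + X a ω ^ 4))) :=
        fun ω => by ring
      simp only [this]
      have j1 := (iSX 3 (by norm_num) 1 (by norm_num)).const_mul 4
      have j2 := (iSX 2 (by norm_num) 2 (by norm_num)).const_mul 6
      have j3 := (iSX 1 (by norm_num) 3 (by norm_num)).const_mul 4
      have j4 := iX 4 (by norm_num)
      rw [integral_add (iS 4 (by norm_num)) (j1.fun_add (j2.fun_add (j3.fun_add j4))),
        integral_add j1 (j2.fun_add (j3.fun_add j4)), integral_add j2 (j3.fun_add j4), integral_add j3 j4,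
        integral_const_mul, integral_const_mul, integral_const_mul,
        eSX 3 (by norm_num) 1 (by norm_num), eSX 2 (by norm_num) 2 (by norm_num),
        eSX 1 (by norm_num) 3 (by norm_num), i2, i1', h1', h2, h4]
      push_cast
      nlinarith [sq_nonneg v]

/-- The moments of the error `n⁻¹ ∑ f (u i) - 1` of an average of i.i.d. variables of mean one. -/
lemma average_moments {E : Type*} [MeasurableSpace E] {G : Measure E} [IsProbabilityMeasure G]
    {f : E → ℝ} (hf : Measurable f) (hmean : ∫ u, f u ∂G = 1)
    (hL : MemLp (fun u => f u - 1) 4 G) {n : ℕ} (hn : 0 < n) :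
    let e : (Fin n → E) → ℝ := fun u => (n : ℝ)⁻¹ * ∑ i, f (u i) - 1
    let ν : Measure (Fin n → E) := Measure.pi fun _ => G
    MemLp e 4 ν ∧ ∫ u, e u ∂ν = 0 ∧
    ∫ u, e u ^ 2 ∂ν = (∫ u, (f u - 1) ^ 2 ∂G) / n ∧
    ∫ u, e u ^ 3 ∂ν = (∫ u, (f u - 1) ^ 3 ∂G) / n ^ 2 ∧
    ∫ u, e u ^ 4 ∂ν ≤ 4 * (∫ u, (f u - 1) ^ 4 ∂G) / n ^ 2 := by
  intro e ν
  have hn0 : (n : ℝ) ≠ 0 := by exact_mod_cast hn.ne'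
  have hn1 : (1 : ℝ) ≤ n := by exact_mod_cast hn
  have hev : ∀ (i : Fin n) (g : E → ℝ), Measurable g → ∫ u : Fin n → E, g (u i) ∂ν = ∫ x, g x ∂G :=
    fun i g hg => integral_comp_eval (μ := fun _ : Fin n => G) hg.aestronglyMeasurable
  have hfi : Integrable f G := by
    have := (hL.integrable (by norm_num)).add (integrable_const (1 : ℝ))
    refine this.congr (ae_of_all _ fun u => ?_)
    simp
  obtain ⟨m0, m1, m2, m3, m4⟩ := sum_moments (ν := ν) (X := fun i u => f (u i) - 1)
    (v := ∫ u, (f u - 1) ^ 2 ∂G) (k := ∫ u, (f u - 1) ^ 3 ∂G) (m := ∫ u, (f u - 1) ^ 4 ∂G)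
    (iIndepFun_pi (μ := fun _ : Fin n => G) (X := fun _ u => f u - 1)
      (fun _ => (hf.sub_const 1).aemeasurable))
    (fun i => by fun_prop)
    (fun i => hL.comp_measurePreserving (measurePreserving_eval (fun _ : Fin n => G) i))
    (fun i => by
      rw [hev i (fun u => f u - 1) (by fun_prop), integral_sub hfi (integrable_const _), hmean]
      simp)
    (fun i => hev i (fun u => (f u - 1) ^ 2) (by fun_prop))
    (fun i => hev i (fun u => (f u - 1) ^ 3) (by fun_prop))
    (fun i => hev i (fun u => (f u - 1) ^ 4) (by fun_prop)) Finset.univ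
  have he : e = fun u => (n : ℝ)⁻¹ * ∑ i, (f (u i) - 1) := by
    ext u
    simp only [e, Finset.sum_sub_distrib, Finset.sum_const, Finset.card_univ, Fintype.card_fin,
      nsmul_eq_mul, mul_one]
    field_simp
  simp only [Finset.card_univ, Fintype.card_fin] at m2 m3 m4
  have hv := sq_second_moment_le hL
  rw [he]
  refine ⟨m0.const_mul _, ?_, ?_, ?_, ?_⟩
  · rw [integral_const_mul, m1, mul_zero]
  · simp only [mul_pow]
    rw [integral_const_mul, m2]; field_simp
  · simp only [mul_pow]
    rw [integral_const_mul, m3]; field_simp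
  · simp only [mul_pow]
    rw [integral_const_mul]
    set m := ∫ u, (f u - 1) ^ 4 ∂G
    have hm : 0 ≤ m := integral_nonneg fun u => by positivity
    calc (n : ℝ)⁻¹ ^ 4 * ∫ u : Fin n → E, (∑ i, (f (u i) - 1)) ^ 4 ∂ν
        ≤ (n : ℝ)⁻¹ ^ 4 * (n ^ 2 * m + 3 * n ^ 2 * m) := by
          gcongr
          refine m4.trans ?_
          have : (n : ℝ) * m ≤ n ^ 2 * m := by gcongr; nlinarith
          gcongr
      _ = 4 * m / n ^ 2 := by field_simp; ring

lemma norm_exp_sub_one_sub_le_of_re_nonpos {x : ℂ} (hx : x.re ≤ 0) :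
    ‖Complex.exp x - 1 - x‖ ≤ 3 * ‖x‖ ^ 2 := by
  rcases le_total ‖x‖ 1 with h | h
  · have := Complex.norm_exp_sub_one_sub_id_le h
    nlinarith [sq_nonneg ‖x‖]
  · have h1 : ‖Complex.exp x‖ ≤ 1 := by rw [Complex.norm_exp]; exact Real.exp_le_one_iff.2 hx
    calc ‖Complex.exp x - 1 - x‖ ≤ ‖Complex.exp x‖ + ‖(1 : ℂ)‖ + ‖x‖ :=
          (norm_sub_le _ _).trans (by gcongr; exact norm_sub_le _ _)
      _ ≤ 1 + 1 + ‖x‖ := by simp; linarith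
      _ ≤ 3 * ‖x‖ ^ 2 := by nlinarith

/-- The logarithm `½ iθ (1 + iθ) v` of the Gaussian approximation to the characteristic function
of one tilted log-weight whose error has variance `v`: mean `v / 2`, variance `v`. -/
noncomputable def gaussExponent (θ v : ℝ) : ℂ :=
  (1 + Complex.I * θ) * (Complex.I * θ) / 2 * v

lemma gaussExponent_re_nonpos (θ : ℝ) {v : ℝ} (hv : 0 ≤ v) : (gaussExponent θ v).re ≤ 0 := by
  have : (gaussExponent θ v).re = -(θ ^ 2 * v / 2) := by
    simp [gaussExponent]; ring
  rw [this]
  have : 0 ≤ θ ^ 2 * v / 2 := by positivity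
  linarith

/-- Characteristic function of one tilted log-weight, compared with its Gaussian approximation: the
Taylor expansion of `twist θ` is integrated term by term. The cubic term only contributes to the
error, since the third moment of the average is `O(n⁻²)`. -/
lemma integral_twist_average {E : Type*} [MeasurableSpace E] {G : Measure E}
    [IsProbabilityMeasure G] {f : E → ℝ} (hf : Measurable f) (hf0 : ∀ u, 0 ≤ f u)
    (hmean : ∫ u, f u ∂G = 1) (hL : MemLp (fun u => f u - 1) 4 G) {n : ℕ} (hn : 0 < n)
    {M θ : ℝ} (hM : |θ| ≤ M) :
    ‖∫ u : Fin n → E, twist θ ((n : ℝ)⁻¹ * ∑ i, f (u i)) ∂(Measure.pi fun _ => G)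
      - Complex.exp (gaussExponent θ ((∫ u, (f u - 1) ^ 2 ∂G) / n))‖
    ≤ (300 * (1 + M) * (1 + M) * (2 + M)) * |θ| * (1 + ∫ u, (f u - 1) ^ 4 ∂G) / n ^ 2 := by
  have hM0 : 0 ≤ M := (abs_nonneg θ).trans hM
  obtain ⟨eL, e1, e2, e3, e4⟩ := average_moments hf hmean hL hn
  set ν : Measure (Fin n → E) := Measure.pi fun _ => G
  set e : (Fin n → E) → ℝ := fun u => (n : ℝ)⁻¹ * ∑ i, f (u i) - 1 with he
  set v := ∫ u, (f u - 1) ^ 2 ∂G with hv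
  set k := ∫ u, (f u - 1) ^ 3 ∂G with hk
  set m := ∫ u, (f u - 1) ^ 4 ∂G with hm
  have hn0 : (0 : ℝ) < n := by exact_mod_cast hn
  have hm0 : 0 ≤ m := integral_nonneg fun u => by positivity
  have hv0 : 0 ≤ v := integral_nonneg fun u => by positivity
  have a4 := integrable_pow_of_memLp_four hL (k := 4) le_rfl
  have a3 := integrable_pow_of_memLp_four hL (k := 3) (by norm_num)
  have a2 := integrable_pow_of_memLp_four hL (k := 2) (by norm_num)
  have hkm : |k| ≤ 1 + m := by
    calc |k| ≤ ∫ u, |(f u - 1) ^ 3| ∂G := abs_integral_le_integral_abs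
      _ ≤ ∫ u, (1 + (f u - 1) ^ 4) ∂G := by
          refine integral_mono a3.abs ((integrable_const _).add a4) fun u => ?_
          simp only []
          rw [abs_le]
          constructor <;> nlinarith [sq_nonneg ((f u - 1) ^ 2 - (f u - 1)),
            sq_nonneg ((f u - 1) ^ 2 + (f u - 1)), sq_nonneg (f u - 1), sq_nonneg ((f u - 1) ^ 2 - 1)]
      _ = 1 + m := by rw [integral_add (integrable_const _) a4]; simp [hm]
  have hvm : v ^ 2 ≤ m := sq_second_moment_le hL
  set z : ℂ := Complex.I * θ with hz
  have hzn : ‖z‖ = |θ| := by simp [hz]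
  have n1 : ‖1 + z‖ ≤ 1 + M := (norm_add_le _ _).trans (by rw [hzn]; simpa using hM)
  have n2 : ‖z - 1‖ ≤ 1 + M := (norm_sub_le _ _).trans (by rw [hzn]; simp; linarith)
  have hwe : ∀ u : Fin n → E, (n : ℝ)⁻¹ * ∑ i, f (u i) = 1 + e u := fun u => by simp [he]
  have hA0 : ∀ u : Fin n → E, 0 ≤ (n : ℝ)⁻¹ * ∑ i, f (u i) := fun u =>
    mul_nonneg (by positivity) (Finset.sum_nonneg fun i _ => hf0 _)
  have ie : ∀ j ≤ 4, Integrable (fun u => e u ^ j) ν := fun j hj =>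
    integrable_pow_of_memLp_four eL hj
  have ieC : ∀ j ≤ 4, Integrable (fun u => (e u : ℂ) ^ j) ν := fun j hj => by
    simpa using (ie j hj).ofReal (𝕜 := ℂ)
  have eC : ∀ j : ℕ, ∫ u, (e u : ℂ) ^ j ∂ν = ((∫ u, e u ^ j ∂ν : ℝ) : ℂ) := fun j => by
    rw [← integral_complex_ofReal]; simp
  have itw : Integrable (fun u : Fin n → E => twist θ ((n : ℝ)⁻¹ * ∑ i, f (u i))) ν := by
    have : Integrable (fun u => 1 + e u) ν :=
      (integrable_const _).add (by simpa using ie 1 (by norm_num))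
    refine this.mono ((measurable_twist θ).comp (by fun_prop)).aestronglyMeasurable
      (ae_of_all _ fun u => ?_)
    rw [norm_twist θ (hA0 u), hwe u, Real.norm_eq_abs]
    exact le_abs_self _
  set c1 : ℂ := 1 + z with hc1
  set c2 : ℂ := (1 + z) * z / 2 with hc2
  set c3 : ℂ := (1 + z) * z * (z - 1) / 6 with hc3
  set K : ℝ := 60 * (1 + M) * (1 + M) * (2 + M) with hK
  have hR : ‖∫ u, (twist θ ((n : ℝ)⁻¹ * ∑ i, f (u i)) - 1 - c1 * (e u : ℂ) ^ 1 - c2 * (e u : ℂ) ^ 2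
      - c3 * (e u : ℂ) ^ 3) ∂ν‖ ≤ K * |θ| * (4 * m / n ^ 2) := by
    refine (norm_integral_le_of_norm_le ((ie 4 le_rfl).const_mul (K * |θ|))
      (ae_of_all _ fun u => ?_)).trans ?_
    · have := taylor_twist hM (hA0 u)
      have h1 : (((n : ℝ)⁻¹ * ∑ i, f (u i) : ℝ) : ℂ) - 1 = (e u : ℂ) := by rw [hwe u]; push_cast; ring
      rw [h1, show (n : ℝ)⁻¹ * ∑ i, f (u i) - 1 = e u from rfl] at this
      rw [pow_one]
      exact this
    · rw [integral_const_mul]; gcongr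
  have hI : ∫ u, (twist θ ((n : ℝ)⁻¹ * ∑ i, f (u i)) - 1 - c1 * (e u : ℂ) ^ 1 - c2 * (e u : ℂ) ^ 2
      - c3 * (e u : ℂ) ^ 3) ∂ν = ∫ u, twist θ ((n : ℝ)⁻¹ * ∑ i, f (u i)) ∂ν
        - 1 - c2 * (v / n : ℝ) - c3 * (k / n ^ 2 : ℝ) := by
    have j1 := (ieC 1 (by norm_num)).const_mul c1
    have j2 := (ieC 2 (by norm_num)).const_mul c2
    have j3 := (ieC 3 (by norm_num)).const_mul c3
    have j0 : Integrable (fun u : Fin n → E => twist θ ((n : ℝ)⁻¹ * ∑ i, f (u i)) - 1) ν :=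
      itw.sub (integrable_const (1 : ℂ))
    have j01 : Integrable (fun u : Fin n → E =>
        twist θ ((n : ℝ)⁻¹ * ∑ i, f (u i)) - 1 - c1 * (e u : ℂ) ^ 1) ν := j0.sub j1
    have j012 : Integrable (fun u : Fin n → E =>
        twist θ ((n : ℝ)⁻¹ * ∑ i, f (u i)) - 1 - c1 * (e u : ℂ) ^ 1 - c2 * (e u : ℂ) ^ 2) ν :=
      j01.sub j2
    rw [integral_sub j012 j3, integral_sub j01 j2, integral_sub j0 j1,
      integral_sub itw (integrable_const _), integral_const_mul, integral_const_mul,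
      integral_const_mul, eC, eC, eC, e2, e3]
    simp [e1]
  rw [hI] at hR
  set Φ := ∫ u, twist θ ((n : ℝ)⁻¹ * ∑ i, f (u i)) ∂ν
  have hx : gaussExponent θ (v / n) = c2 * (v / n : ℝ) := rfl
  have hexp := norm_exp_sub_one_sub_le_of_re_nonpos
    (gaussExponent_re_nonpos θ (v := v / n) (by positivity))
  have hxn : ‖gaussExponent θ (v / n)‖ ^ 2 ≤ M * (1 + M) * (1 + M) * |θ| / 4 * (m / n ^ 2) := by
    have : ‖gaussExponent θ (v / n)‖ = ‖1 + z‖ * |θ| / 2 * (v / n) := by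
      rw [hx, norm_mul, hc2, norm_div, norm_mul, hzn, Complex.norm_real, Real.norm_eq_abs,
        abs_of_nonneg (by positivity : 0 ≤ v / n), Complex.norm_ofNat]
    rw [this]
    calc (‖1 + z‖ * |θ| / 2 * (v / n)) ^ 2
        = ‖1 + z‖ * ‖1 + z‖ * (|θ| * |θ|) / 4 * (v ^ 2 / n ^ 2) := by ring
      _ ≤ (1 + M) * (1 + M) * (M * |θ|) / 4 * (m / n ^ 2) := by gcongr
      _ = _ := by ring
  have hc3n : ‖c3 * (k / n ^ 2 : ℝ)‖ ≤ (1 + M) * |θ| * (1 + M) / 6 * ((1 + m) / n ^ 2) := by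
    rw [norm_mul, hc3, norm_div, norm_mul, norm_mul, hzn, Complex.norm_real, Real.norm_eq_abs,
      abs_div, abs_of_nonneg (by positivity : 0 ≤ (n : ℝ) ^ 2), Complex.norm_ofNat]
    gcongr
  have hsplit : Φ - Complex.exp (gaussExponent θ (v / n))
      = (Φ - 1 - c2 * (v / n : ℝ) - c3 * (k / n ^ 2 : ℝ)) + c3 * (k / n ^ 2 : ℝ)
        - (Complex.exp (gaussExponent θ (v / n)) - 1 - gaussExponent θ (v / n)) := by
    rw [hx]; ring
  rw [hsplit]
  refine (norm_sub_le _ _).trans ?_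
  refine (add_le_add ((norm_add_le _ _).trans (add_le_add hR hc3n))
    (hexp.trans (mul_le_mul_of_nonneg_left hxn (by norm_num)))).trans ?_
  have hmn : m / (n : ℝ) ^ 2 ≤ (1 + m) / n ^ 2 := by gcongr; linarith
  set q := (1 + m) / (n : ℝ) ^ 2 with hq
  have hq0 : 0 ≤ q := by positivity
  calc K * |θ| * (4 * m / n ^ 2) + (1 + M) * |θ| * (1 + M) / 6 * q
        + 3 * (M * (1 + M) * (1 + M) * |θ| / 4 * (m / n ^ 2))
      = K * |θ| * 4 * (m / n ^ 2) + (1 + M) * |θ| * (1 + M) / 6 * q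
        + 3 * (M * (1 + M) * (1 + M) * |θ| / 4 * (m / n ^ 2)) := by ring
    _ ≤ K * |θ| * 4 * q + (1 + M) * |θ| * (1 + M) / 6 * q
        + 3 * (M * (1 + M) * (1 + M) * |θ| / 4 * q) := by gcongr
    _ = (4 * 60 * (2 + M) + 1 / 6 + 3 / 4 * M) * ((1 + M) * (1 + M) * |θ| * q) := by rw [hK]; ring
    _ ≤ (300 * (2 + M)) * ((1 + M) * (1 + M) * |θ| * q) := by gcongr; linarith
    _ = _ := by rw [hq]; ring

/-! ### The conditional tilted law and its characteristic function -/

/-- Replacing the factors of modulus at most one, one at a time, only adds up the errors. -/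
lemma norm_prod_sub_prod_le_sum {ι : Type*} (s : Finset ι) (a b : ι → ℂ)
    (ha : ∀ i, ‖a i‖ ≤ 1) (hb : ∀ i, ‖b i‖ ≤ 1) :
    ‖∏ i ∈ s, a i - ∏ i ∈ s, b i‖ ≤ ∑ i ∈ s, ‖a i - b i‖ := by
  classical
  induction s using Finset.induction_on with
  | empty => simp
  | insert j s hj ih =>
    rw [Finset.prod_insert hj, Finset.prod_insert hj, Finset.sum_insert hj]
    have e : a j * ∏ i ∈ s, a i - b j * ∏ i ∈ s, b i
        = (a j - b j) * ∏ i ∈ s, a i + b j * (∏ i ∈ s, a i - ∏ i ∈ s, b i) := by ring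
    rw [e]
    refine (norm_add_le _ _).trans ?_
    rw [norm_mul, norm_mul]
    have h1 : ‖∏ i ∈ s, a i‖ ≤ 1 := by
      rw [norm_prod]; exact Finset.prod_le_one (fun _ _ => norm_nonneg _) fun i _ => ha i
    have := mul_le_of_le_one_right (norm_nonneg (a j - b j)) h1
    have := mul_le_of_le_one_left (norm_nonneg (∏ i ∈ s, a i - ∏ i ∈ s, b i)) (hb j)
    linarith

/-- The rows of an i.i.d. array are independent. -/
lemma measurePreserving_curry_pi {E : Type*} [MeasurableSpace E] (G : Measure E)
    [IsProbabilityMeasure G] (T n : ℕ) :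
    MeasurePreserving (MeasurableEquiv.curry (Fin T) (Fin n) E)
      (Measure.pi fun _ : Fin T × Fin n => G)
      (Measure.pi fun _ : Fin T => Measure.pi fun _ : Fin n => G) := by
  refine ⟨(MeasurableEquiv.curry (Fin T) (Fin n) E).measurable, ?_⟩
  have := Measure.infinitePi_map_curry (ι := Fin T) (κ := Fin n) (X := E) (fun _ _ => G)
  simpa only [Measure.infinitePi_eq_pi] using this

lemma integral_prod_rows {𝕜 E : Type*} [RCLike 𝕜] [MeasurableSpace E] (G : Measure E)
    [IsProbabilityMeasure G] (T n : ℕ) (g : Fin T → (Fin n → E) → 𝕜) :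
    ∫ u : Fin T × Fin n → E, ∏ t, g t (fun i => u (t, i)) ∂(Measure.pi fun _ => G)
      = ∏ t, ∫ x, g t x ∂(Measure.pi fun _ : Fin n => G) := by
  rw [← integral_fintype_prod_eq_prod (fun t => g t)]
  exact (measurePreserving_curry_pi G T n).integral_comp'
    (g := fun x : Fin T → Fin n → E => ∏ t, g t (x t))

lemma integrable_prod_rows {E : Type*} [MeasurableSpace E] (G : Measure E)
    [IsProbabilityMeasure G] (T n : ℕ) (g : Fin T → (Fin n → E) → ℝ)
    (hg : ∀ t, Integrable (g t) (Measure.pi fun _ : Fin n => G)) :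
    Integrable (fun u : Fin T × Fin n → E => ∏ t, g t (fun i => u (t, i)))
      (Measure.pi fun _ => G) :=
  (measurePreserving_curry_pi G T n).integrable_comp_of_integrable
    (g := fun x : Fin T → Fin n → E => ∏ t, g t (x t)) (Integrable.fintype_prod_dep hg)

/-- The estimated weight `n⁻¹ ∑ᵢ ϖ(y_t, u_{t,i})` of the `t`-th observation. -/
noncomputable def rowAvg {𝓨 E : Type*} (ϖ : 𝓨 → E → ℝ) {T n : ℕ} (y : Fin T → 𝓨)
    (u : Fin T × Fin n → E) (t : Fin T) : ℝ :=
  (n : ℝ)⁻¹ * ∑ i, ϖ (y t) (u (t, i))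

/-- The density `∏ₜ Ŵ_t` of the tilted law with respect to the original one. -/
noncomputable def tiltDensity {𝓨 E : Type*} (ϖ : 𝓨 → E → ℝ) {T n : ℕ} (y : Fin T → 𝓨)
    (u : Fin T × Fin n → E) : ℝ := ∏ t, rowAvg ϖ y u t

/-- The loglikelihood error `∑ₜ log Ŵ_t`. -/
noncomputable def logErr {𝓨 E : Type*} (ϖ : 𝓨 → E → ℝ) {T n : ℕ} (y : Fin T → 𝓨)
    (u : Fin T × Fin n → E) : ℝ := ∑ t, Real.log (rowAvg ϖ y u t)

/-- The conditional law, given the observations `y`, of the rescaled loglikelihood error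
`a * Z - b` under the tilted measure. -/
noncomputable def tiltLaw {𝓨 E : Type*} [MeasurableSpace E] (ϖ : 𝓨 → E → ℝ) (G : Measure E)
    (T n : ℕ) (a b : ℝ) (y : Fin T → 𝓨) : Measure ℝ :=
  ((Measure.pi fun _ : Fin T × Fin n => G).withDensity
    fun u => ENNReal.ofReal (tiltDensity ϖ y u)).map fun u => a * logErr ϖ y u - b

/-- The observations for which the weight is normalized and has a fourth moment. -/
def Good {𝓨 E : Type*} [MeasurableSpace E] (ϖ : 𝓨 → E → ℝ) (G : Measure E) (y : 𝓨) : Prop :=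
  ∫ u, ϖ y u ∂G = 1 ∧ MemLp (fun u => ϖ y u - 1) 4 G

section TiltLaw

variable {𝓨 E : Type*} [MeasurableSpace 𝓨] [MeasurableSpace E] {ϖ : 𝓨 → E → ℝ} {G : Measure E}
  {T n : ℕ}

omit [MeasurableSpace 𝓨] [MeasurableSpace E] in
lemma rowAvg_nonneg (h0 : ∀ y u, 0 ≤ ϖ y u) (y : Fin T → 𝓨) (u : Fin T × Fin n → E) (t : Fin T) :
    0 ≤ rowAvg ϖ y u t :=
  mul_nonneg (by positivity) (Finset.sum_nonneg fun i _ => h0 _ _)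

omit [MeasurableSpace 𝓨] [MeasurableSpace E] in
lemma tiltDensity_nonneg (h0 : ∀ y u, 0 ≤ ϖ y u) (y : Fin T → 𝓨) (u : Fin T × Fin n → E) :
    0 ≤ tiltDensity ϖ y u := Finset.prod_nonneg fun t _ => rowAvg_nonneg h0 y u t

lemma measurable_rowAvg (hϖ : Measurable (Function.uncurry ϖ)) (t : Fin T) :
    Measurable fun q : (Fin T → 𝓨) × (Fin T × Fin n → E) => rowAvg ϖ q.1 q.2 t := by
  unfold rowAvg
  refine Measurable.const_mul (Finset.measurable_sum _ fun i _ => ?_) _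
  have h : Measurable fun q : (Fin T → 𝓨) × (Fin T × Fin n → E) => (q.1 t, q.2 (t, i)) :=
    ((measurable_pi_apply t).comp measurable_fst).prodMk
      ((measurable_pi_apply (t, i)).comp measurable_snd)
  exact hϖ.comp h

lemma measurable_tiltDensity (hϖ : Measurable (Function.uncurry ϖ)) :
    Measurable fun q : (Fin T → 𝓨) × (Fin T × Fin n → E) => tiltDensity ϖ q.1 q.2 :=
  Finset.measurable_prod _ fun t _ => measurable_rowAvg hϖ t

lemma measurable_logErr (hϖ : Measurable (Function.uncurry ϖ)) :
    Measurable fun q : (Fin T → 𝓨) × (Fin T × Fin n → E) => logErr ϖ q.1 q.2 :=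
  Finset.measurable_sum _ fun t _ => (measurable_rowAvg hϖ t).log

variable [IsProbabilityMeasure G]

lemma integrable_average {f : E → ℝ} (hf : Integrable f G) :
    Integrable (fun x : Fin n → E => (n : ℝ)⁻¹ * ∑ i, f (x i)) (Measure.pi fun _ => G) :=
  (integrable_finsetSum _ fun i _ =>
    integrable_comp_eval (μ := fun _ : Fin n => G) (i := i) hf).const_mul _

lemma integral_average {f : E → ℝ} (hf : Integrable f G) (hn : 0 < n) :
    ∫ x : Fin n → E, (n : ℝ)⁻¹ * ∑ i, f (x i) ∂(Measure.pi fun _ => G) = ∫ u, f u ∂G := by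
  have hn0 : (n : ℝ) ≠ 0 := by exact_mod_cast hn.ne'
  rw [integral_const_mul, integral_finsetSum _ fun i _ =>
    integrable_comp_eval (μ := fun _ : Fin n => G) (i := i) hf]
  simp_rw [integral_comp_eval (μ := fun _ : Fin n => G) hf.aestronglyMeasurable]
  simp [hn0]

omit [MeasurableSpace 𝓨] in
lemma integrable_tiltDensity {y : Fin T → 𝓨} (hint : ∀ t, Integrable (ϖ (y t)) G) :
    Integrable (fun u : Fin T × Fin n → E => tiltDensity ϖ y u) (Measure.pi fun _ => G) :=
  integrable_prod_rows G T n (fun t x => (n : ℝ)⁻¹ * ∑ i, ϖ (y t) (x i))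
    fun t => integrable_average (hint t)

omit [MeasurableSpace 𝓨] in
lemma integral_tiltDensity {y : Fin T → 𝓨} (hint : ∀ t, Integrable (ϖ (y t)) G)
    (h1 : ∀ t, ∫ u, ϖ (y t) u ∂G = 1) (hn : 0 < n) :
    ∫ u : Fin T × Fin n → E, tiltDensity ϖ y u ∂(Measure.pi fun _ => G) = 1 := by
  refine (integral_prod_rows G T n (fun t x => (n : ℝ)⁻¹ * ∑ i, ϖ (y t) (x i))).trans ?_
  exact Finset.prod_eq_one fun t _ => by rw [integral_average (hint t) hn, h1 t]

omit [MeasurableSpace 𝓨] in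
lemma Good.integrable {y : 𝓨} (h : Good ϖ G y) : Integrable (ϖ y) G := by
  have := (h.2.integrable (by norm_num)).add (integrable_const (1 : ℝ))
  refine this.congr (ae_of_all _ fun u => ?_)
  simp

omit [IsProbabilityMeasure G] in
lemma integral_tiltLaw {F : Type*} [NormedAddCommGroup F] [NormedSpace ℝ F]
    (hϖ : Measurable (Function.uncurry ϖ)) (h0 : ∀ y u, 0 ≤ ϖ y u) (a b : ℝ) (y : Fin T → 𝓨)
    {g : ℝ → F} (hg : StronglyMeasurable g) :
    ∫ x, g x ∂(tiltLaw ϖ G T n a b y)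
      = ∫ u : Fin T × Fin n → E, tiltDensity ϖ y u • g (a * logErr ϖ y u - b)
          ∂(Measure.pi fun _ => G) := by
  have hL : Measurable fun u : Fin T × Fin n → E => a * logErr ϖ y u - b :=
    (((measurable_logErr hϖ).comp measurable_prodMk_left).const_mul a).sub_const b
  have hD : Measurable fun u : Fin T × Fin n → E => tiltDensity ϖ y u :=
    (measurable_tiltDensity hϖ).comp measurable_prodMk_left
  rw [tiltLaw, integral_map hL.aemeasurable hg.aestronglyMeasurable,
    integral_withDensity_eq_integral_toReal_smul hD.ennreal_ofReal
      (ae_of_all _ fun _ => ENNReal.ofReal_lt_top)]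
  simp_rw [ENNReal.toReal_ofReal (tiltDensity_nonneg h0 y _)]

lemma isProbabilityMeasure_tiltLaw
    (hϖ : Measurable (Function.uncurry ϖ)) (h0 : ∀ y u, 0 ≤ ϖ y u) (a b : ℝ) {y : Fin T → 𝓨}
    (hint : ∀ t, Integrable (ϖ (y t)) G) (h1 : ∀ t, ∫ u, ϖ (y t) u ∂G = 1) (hn : 0 < n) :
    IsProbabilityMeasure (tiltLaw ϖ G T n a b y) := by
  have hL : Measurable fun u : Fin T × Fin n → E => a * logErr ϖ y u - b :=
    (((measurable_logErr hϖ).comp measurable_prodMk_left).const_mul a).sub_const b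
  constructor
  rw [tiltLaw, Measure.map_apply hL MeasurableSet.univ, Set.preimage_univ,
    withDensity_apply _ MeasurableSet.univ, Measure.restrict_univ,
    ← ofReal_integral_eq_lintegral_ofReal (integrable_tiltDensity hint)
      (ae_of_all _ fun u => tiltDensity_nonneg h0 y u), integral_tiltDensity hint h1 hn,
    ENNReal.ofReal_one]

omit [MeasurableSpace 𝓨] [MeasurableSpace E] in
/-- Tilting by the weights turns `exp(iθ ∑ log Ŵ_t)` into a product over the rows. -/
lemma tiltDensity_smul_exp (θ b s : ℝ) (y : Fin T → 𝓨) (u : Fin T × Fin n → E) (a : ℝ)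
    (hθ : θ = s * a) :
    tiltDensity ϖ y u • Complex.exp (s * (a * logErr ϖ y u - b : ℝ) * Complex.I)
      = Complex.exp (-(Complex.I * s * b)) * ∏ t, twist θ (rowAvg ϖ y u t) := by
  simp only [twist, Finset.prod_mul_distrib, ← Complex.exp_sum, tiltDensity, logErr,
    Complex.real_smul, Complex.ofReal_prod]
  rw [mul_left_comm, ← Complex.exp_add]
  congr 2
  rw [← Finset.mul_sum, ← Complex.ofReal_sum, ← Finset.mul_sum, hθ]
  push_cast
  ring

/-- The constant in the comparison of characteristic functions. -/
noncomputable def cfConst (s : ℝ) : ℝ :=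
  (300 * (1 + |s|) * (1 + |s|) * (2 + |s|)) * |s|

/-- The characteristic function of the conditional tilted law, compared with a Gaussian one. The
observations enter only through `∑ m(y_t)` (fourth moments, in the error bound) and through
`δ = a ∑ v(y_t) / (2n) - b` (the centring error); the limit variance is `g = 2ab`. -/
lemma charFun_tiltLaw_sub_le (hϖ : Measurable (Function.uncurry ϖ)) (h0 : ∀ y u, 0 ≤ ϖ y u)
    {a b g : ℝ} (ha0 : 0 ≤ a) (ha1 : a ≤ 1) (hab : a * b = g / 2) {y : Fin T → 𝓨}
    (hy : ∀ t, Good ϖ G (y t)) (hn : 0 < n) {δ : ℝ}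
    (hδ : δ = a / (2 * n) * ∑ t, ∫ u, (ϖ (y t) u - 1) ^ 2 ∂G - b) (s : ℝ) :
    ‖charFun (tiltLaw ϖ G T n a b y) s
      - Complex.exp (Complex.I * s * δ - s ^ 2 * a * δ - s ^ 2 * g / 2)‖
    ≤ cfConst s * (a / n ^ 2 * ∑ t, (1 + ∫ u, (ϖ (y t) u - 1) ^ 4 ∂G)) := by
  set θ := s * a with hθ
  have hθs : |θ| ≤ |s| := by
    rw [hθ, abs_mul, abs_of_nonneg ha0]; exact mul_le_of_le_one_right (abs_nonneg s) ha1
  have hfm : ∀ t, Measurable (ϖ (y t)) := fun t => hϖ.comp measurable_prodMk_left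
  set φ : Fin T → ℂ := fun t =>
    ∫ x : Fin n → E, twist θ ((n : ℝ)⁻¹ * ∑ i, ϖ (y t) (x i)) ∂(Measure.pi fun _ => G) with hφ
  set ψ : Fin T → ℂ := fun t =>
    Complex.exp (gaussExponent θ ((∫ u, (ϖ (y t) u - 1) ^ 2 ∂G) / n)) with hψ
  have hcf : charFun (tiltLaw ϖ G T n a b y) s
      = Complex.exp (-(Complex.I * s * b)) * ∏ t, φ t := by
    rw [charFun_apply_real, integral_tiltLaw hϖ h0 a b y (by fun_prop)]
    simp_rw [tiltDensity_smul_exp θ b s y _ a hθ]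
    rw [integral_const_mul]
    congr 1
    exact integral_prod_rows G T n (fun t x => twist θ ((n : ℝ)⁻¹ * ∑ i, ϖ (y t) (x i)))
  have hgs : Complex.exp (Complex.I * s * δ - s ^ 2 * a * δ - s ^ 2 * g / 2)
      = Complex.exp (-(Complex.I * s * b)) * ∏ t, ψ t := by
    simp only [hψ]
    rw [← Complex.exp_sum, ← Complex.exp_add]
    congr 1
    have hnC : (n : ℂ) ≠ 0 := by exact_mod_cast hn.ne'
    simp only [gaussExponent]
    rw [← Finset.mul_sum, ← Complex.ofReal_sum, ← Finset.sum_div]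
    set V := ∑ t, ∫ u, (ϖ (y t) u - 1) ^ 2 ∂G
    have hg : (g : ℂ) = 2 * (a * b) := by
      rw [← Complex.ofReal_mul, hab]; push_cast; ring
    rw [hδ, hθ, hg]
    push_cast
    field_simp
    ring_nf
    simp only [Complex.I_sq]
    ring
  have hφ1 : ∀ t, ‖φ t‖ ≤ 1 := fun t => by
    refine (norm_integral_le_of_norm_le (integrable_average (hy t).integrable)
      (ae_of_all _ fun x => ?_)).trans ((integral_average (hy t).integrable hn).trans (hy t).1).le
    exact (norm_twist θ (mul_nonneg (by positivity) (Finset.sum_nonneg fun i _ => h0 _ _))).le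
  have hψ1 : ∀ t, ‖ψ t‖ ≤ 1 := fun t => by
    rw [hψ, Complex.norm_exp]
    exact Real.exp_le_one_iff.2 (gaussExponent_re_nonpos θ
      (div_nonneg (integral_nonneg fun u => sq_nonneg _) (by positivity)))
  rw [hcf, hgs, ← mul_sub, norm_mul]
  have hn1 : ‖Complex.exp (-(Complex.I * s * b))‖ = 1 := by
    have : -(Complex.I * s * b) = Complex.I * ((-(s * b) : ℝ) : ℂ) := by push_cast; ring
    rw [this, Complex.norm_exp_I_mul_ofReal]
  rw [hn1, one_mul]
  refine (norm_prod_sub_prod_le_sum _ φ ψ hφ1 hψ1).trans ?_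
  rw [← mul_assoc, Finset.mul_sum]
  refine Finset.sum_le_sum fun t _ => ?_
  refine (integral_twist_average (hfm t) (h0 _) (hy t).1 (hy t).2 hn hθs).trans (le_of_eq ?_)
  rw [hθ, abs_mul, abs_of_nonneg ha0, cfConst]
  ring

end TiltLaw

/-! ### From characteristic functions to integrals -/

/-- Lévy's continuity theorem in the quantitative form needed here: laws whose characteristic
functions are controlled by small parameters `S`, `δ` integrate `f` almost like `N(0, g)`. The
radius `r` depends on neither the law nor the observations, which is what turns convergence in
probability of `S` and `δ` into convergence in probability of the conditional expectations. -/
lemma integral_close_of_charFun_close (f : BoundedContinuousFunction ℝ ℝ) {g : ℝ} (hg : 0 ≤ g)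
    {ε : ℝ} (hε : 0 < ε) :
    ∃ r > 0, ∀ ν : Measure ℝ, IsProbabilityMeasure ν → ∀ S δ a : ℝ, 0 ≤ a → a ≤ 1 → |S| ≤ r →
      |δ| ≤ r →
      (∀ s : ℝ, ‖charFun ν s - Complex.exp (Complex.I * s * δ - s ^ 2 * a * δ - s ^ 2 * g / 2)‖
        ≤ cfConst s * S) →
      |∫ x, f x ∂ν - ∫ x, f x ∂(gaussianReal 0 g.toNNReal)| < ε := by
  -- a counterexample for each radius `1 / (k + 1)` gives a sequence of laws that converges to
  -- `N(0, g)` by Lévy's theorem, while its integrals of `f` stay away from the limit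
  by_contra! hcon
  have hpos : ∀ k : ℕ, (0 : ℝ) < 1 / (k + 1) := fun k => by positivity
  choose ν hν S δ a ha0 ha1 hS hδ hcf hbad using fun k : ℕ => hcon (1 / (k + 1)) (hpos k)
  have hr : Tendsto (fun k : ℕ => (1 : ℝ) / (k + 1)) atTop (nhds 0) :=
    tendsto_one_div_add_atTop_nhds_zero_nat
  have hS0 : Tendsto S atTop (nhds 0) := squeeze_zero_norm hS hr
  have hδ0 : Tendsto δ atTop (nhds 0) := squeeze_zero_norm hδ hr
  have haδ : Tendsto (fun k => a k * δ k) atTop (nhds 0) := by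
    refine squeeze_zero_norm (fun k => ?_) hr
    rw [norm_mul, Real.norm_eq_abs, Real.norm_eq_abs, abs_of_nonneg (ha0 k)]
    exact (mul_le_of_le_one_left (abs_nonneg _) (ha1 k)).trans (hδ k)
  let ν' : ℕ → ProbabilityMeasure ℝ := fun k => ⟨ν k, hν k⟩
  let γ' : ProbabilityMeasure ℝ := ⟨gaussianReal 0 g.toNNReal, inferInstance⟩
  have hconv : Tendsto ν' atTop (nhds γ') := by
    refine ProbabilityMeasure.tendsto_iff_tendsto_charFun.2 fun s => ?_
    change Tendsto (fun k => charFun (ν k) s) atTop (nhds (charFun (gaussianReal 0 g.toNNReal) s))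
    have h1 : Tendsto (fun k => charFun (ν k) s - Complex.exp
        (Complex.I * s * δ k - s ^ 2 * a k * δ k - s ^ 2 * g / 2)) atTop (nhds 0) := by
      refine squeeze_zero_norm (hcf · s) ?_
      simpa using hS0.const_mul (cfConst s)
    have h2 : Tendsto (fun k => Complex.exp
        (Complex.I * s * δ k - s ^ 2 * a k * δ k - s ^ 2 * g / 2)) atTop
        (nhds (charFun (gaussianReal 0 g.toNNReal) s)) := by
      have hδC : Tendsto (fun k => (δ k : ℂ)) atTop (nhds 0) := by
        simpa [Function.comp_def] using (Complex.continuous_ofReal.tendsto 0).comp hδ0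
      have haC : Tendsto (fun k => (a k * δ k : ℂ)) atTop (nhds 0) := by
        simpa [Function.comp_def] using (Complex.continuous_ofReal.tendsto 0).comp haδ
      have h3 := (((hδC.const_mul (Complex.I * s)).sub (haC.const_mul ((s : ℂ) ^ 2))).sub_const
        ((s : ℂ) ^ 2 * g / 2)).cexp
      have h4 : charFun (gaussianReal 0 g.toNNReal) s = Complex.exp
          (Complex.I * s * 0 - (s : ℂ) ^ 2 * 0 - (s : ℂ) ^ 2 * g / 2) := by
        rw [charFun_gaussianReal]
        have : ((g.toNNReal : ℝ) : ℂ) = g := by rw [Real.coe_toNNReal _ hg]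
        rw [this]
        congr 1
        push_cast
        ring
      rw [h4]
      refine h3.congr fun k => ?_
      congr 1
      ring
    simpa using h1.add h2
  have := (ProbabilityMeasure.tendsto_iff_forall_integral_tendsto.1 hconv) f
  have hlim := (Metric.tendsto_atTop.1 this ε hε)
  obtain ⟨k, hk⟩ := hlim
  exact absurd (hk k le_rfl) (not_lt.2 (hbad k))

/-! ### Rates and convergence in probability -/

lemma tendsto_rpow_natCast_atTop_zero {e : ℝ} (he : e < 0) :
    Tendsto (fun T : ℕ => (T : ℝ) ^ e) atTop (nhds 0) := by
  have := (tendsto_rpow_neg_atTop (y := -e) (by linarith)).comp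
    (tendsto_natCast_atTop_atTop (R := ℝ))
  simpa [Function.comp_def] using this

/-- `∫ X² = Var X + (∫ X)²` for an affine function `X` of a sum of i.i.d. terms. -/
lemma integral_sq_sum_pi {𝓨 : Type*} [MeasurableSpace 𝓨] {μ : Measure 𝓨} [IsProbabilityMeasure μ]
    {v : 𝓨 → ℝ} (hv : MemLp v 2 μ) (T : ℕ) (c b : ℝ) :
    Integrable (fun y : Fin T → 𝓨 => (c * ∑ t, v (y t) - b) ^ 2) (Measure.pi fun _ => μ) ∧
    ∫ y : Fin T → 𝓨, (c * ∑ t, v (y t) - b) ^ 2 ∂(Measure.pi fun _ => μ)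
      = c ^ 2 * T * Var[v; μ] + (c * T * ∫ y, v y ∂μ - b) ^ 2 := by
  have hvt : ∀ t : Fin T, MemLp (fun y : Fin T → 𝓨 => v (y t)) 2 (Measure.pi fun _ => μ) :=
    fun t => hv.comp_measurePreserving (measurePreserving_eval (fun _ : Fin T => μ) t)
  have hS : MemLp (fun y : Fin T → 𝓨 => ∑ t, v (y t)) 2 (Measure.pi fun _ => μ) :=
    memLp_finsetSum _ fun t _ => hvt t
  have hX : MemLp (fun y : Fin T → 𝓨 => c * ∑ t, v (y t) - b) 2 (Measure.pi fun _ => μ) :=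
    (hS.const_mul c).sub (memLp_const b)
  refine ⟨hX.integrable_sq, ?_⟩
  have h1 := variance_eq_sub hX
  have hE : ∫ y : Fin T → 𝓨, (c * ∑ t, v (y t) - b) ∂(Measure.pi fun _ => μ)
      = c * T * ∫ y, v y ∂μ - b := by
    rw [integral_sub ((hS.integrable (by norm_num)).const_mul c) (integrable_const b),
      integral_const_mul, integral_finsetSum _ fun t _ => (hvt t).integrable (by norm_num)]
    simp_rw [integral_comp_eval (μ := fun _ : Fin T => μ) hv.aestronglyMeasurable]
    simp
    ring
  have hV : Var[fun y : Fin T → 𝓨 => c * ∑ t, v (y t) - b; Measure.pi fun _ => μ]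
      = c ^ 2 * T * Var[v; μ] := by
    rw [variance_sub_const ((hS.const_mul c).aestronglyMeasurable), variance_const_mul]
    have := variance_sum_pi (μ := fun _ : Fin T => μ) (X := fun _ => v) (fun _ => hv)
    have e : (fun y : Fin T → 𝓨 => ∑ t, v (y t)) = ∑ t, fun y : Fin T → 𝓨 => v (y t) := by
      ext; simp
    rw [e, this]
    simp
    ring
  simp only [Pi.pow_apply] at h1
  rw [hE, hV] at h1
  linarith

section Rates

variable {α β : ℝ} {N : ℕ → ℕ}

/-- Bounds on the deterministic rates, with `a = T^((α-1)/2)`: they follow from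
`c ≤ N_T ≤ c + 1` for `c = β T^α`, which gives `|1 / N_T - 1 / c| ≤ 1 / c²`. This is where the
exponent `(1 - 3α) / 2`, hence the threshold `α > 1/3`, comes from. -/
lemma rate_bounds (hα1 : α ≤ 1) (hβ : 0 < β)
    (hN : ∀ T, N T = Nat.ceil (β * (T : ℝ) ^ α)) (T : ℕ) (hT : 0 < T) :
    0 < N T ∧ (T : ℝ) ^ ((α - 1) / 2) ≤ 1 ∧
    (T : ℝ) ^ ((α - 1) / 2) / (N T : ℝ) ^ 2 * T ≤ (β⁻¹) ^ 2 * (T : ℝ) ^ ((1 - 3 * α) / 2) ∧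
    ((T : ℝ) ^ ((α - 1) / 2) / (2 * N T)) ^ 2 * T ≤ (β⁻¹) ^ 2 * (T : ℝ) ^ (-α) ∧
    |(T : ℝ) ^ ((α - 1) / 2) / (2 * N T) * T - 1 / 2 * (T : ℝ) ^ ((1 - α) / 2) * β⁻¹|
      ≤ (β⁻¹) ^ 2 * (T : ℝ) ^ ((1 - 3 * α) / 2) := by
  have hT0 : (0 : ℝ) < T := by exact_mod_cast hT
  have hT1 : (1 : ℝ) ≤ T := by exact_mod_cast hT
  have hc0 : 0 < β * (T : ℝ) ^ α := by positivity
  have hn : 0 < N T := by rw [hN]; exact Nat.ceil_pos.2 hc0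
  have hn0 : (0 : ℝ) < N T := by exact_mod_cast hn
  have hcn : β * (T : ℝ) ^ α ≤ N T := by rw [hN]; exact Nat.le_ceil _
  have hnc : (N T : ℝ) ≤ β * (T : ℝ) ^ α + 1 := by
    rw [hN]; exact (Nat.ceil_lt_add_one hc0.le).le
  have ha0 : 0 < (T : ℝ) ^ ((α - 1) / 2) := by positivity
  have e1 : (T : ℝ) ^ ((α - 1) / 2) / (β * (T : ℝ) ^ α) ^ 2 * T
      = (β⁻¹) ^ 2 * (T : ℝ) ^ ((1 - 3 * α) / 2) := by
    have : (T : ℝ) ^ ((1 - 3 * α) / 2) * ((T : ℝ) ^ α) ^ 2 = (T : ℝ) ^ ((α - 1) / 2) * T := by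
      rw [← Real.rpow_natCast ((T : ℝ) ^ α), ← Real.rpow_mul hT0.le, ← Real.rpow_add hT0,
        ← Real.rpow_add_one hT0.ne']
      congr 1; push_cast; ring
    have hTα : 0 < (T : ℝ) ^ α := by positivity
    generalize (T : ℝ) ^ ((1 - 3 * α) / 2) = q at this ⊢
    field_simp
    linarith
  have e2 : ((T : ℝ) ^ ((α - 1) / 2) / (β * (T : ℝ) ^ α)) ^ 2 * T = (β⁻¹) ^ 2 * (T : ℝ) ^ (-α) := by
    have : (T : ℝ) ^ (-α) * ((T : ℝ) ^ α) ^ 2 = ((T : ℝ) ^ ((α - 1) / 2)) ^ 2 * T := by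
      rw [← Real.rpow_natCast ((T : ℝ) ^ α), ← Real.rpow_mul hT0.le, ← Real.rpow_add hT0,
        ← Real.rpow_natCast ((T : ℝ) ^ ((α - 1) / 2)), ← Real.rpow_mul hT0.le,
        ← Real.rpow_add_one hT0.ne']
      congr 1; push_cast; ring
    field_simp
    linarith
  have e3 : (T : ℝ) ^ ((1 - α) / 2) * β⁻¹
      = (T : ℝ) ^ ((α - 1) / 2) * T / (β * (T : ℝ) ^ α) := by
    have : (T : ℝ) ^ ((1 - α) / 2) * (T : ℝ) ^ α = (T : ℝ) ^ ((α - 1) / 2) * T := by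
      rw [← Real.rpow_add hT0, ← Real.rpow_add_one hT0.ne']
      congr 1; ring
    field_simp
    linarith
  refine ⟨hn, Real.rpow_le_one_of_one_le_of_nonpos hT1 (by linarith), ?_, ?_, ?_⟩
  · rw [← e1]; gcongr
  · rw [← e2]
    have := div_le_div_of_nonneg_left ha0.le hc0 (by linarith : β * (T : ℝ) ^ α ≤ 2 * N T)
    gcongr
  · rw [mul_assoc, e3, ← e1]
    set a := (T : ℝ) ^ ((α - 1) / 2)
    set c := β * (T : ℝ) ^ α
    have e : a / (2 * N T) * T - 1 / 2 * (a * T / c) = -(a * T / 2 * ((N T - c) / (N T * c))) := by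
      field_simp
      ring
    have h0 : 0 ≤ (N T - c) / (N T * c) := div_nonneg (by linarith) (by positivity)
    rw [e, abs_neg, abs_of_nonneg (by positivity)]
    have h1 : (N T - c) / (N T * c) ≤ 1 / c ^ 2 := by
      gcongr
      · linarith
      · nlinarith
    have h2 : a / c ^ 2 * T = a * T * (1 / c ^ 2) := by ring
    rw [h2]
    have := mul_le_mul_of_nonneg_left h1 (by positivity : 0 ≤ a * T)
    have : 0 ≤ a * T * ((N T - c) / (N T * c)) := by positivity
    linarith

variable {𝓨 : Type*} [MeasurableSpace 𝓨] {μ : Measure 𝓨} [IsProbabilityMeasure μ]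

/-- Markov's inequality along the sequence of product measures. -/
lemma tendsto_measure_of_integral_tendsto_zero {X : (T : ℕ) → (Fin T → 𝓨) → ℝ}
    (h0 : ∀ T y, 0 ≤ X T y) (hX : ∀ T, Integrable (X T) (Measure.pi fun _ : Fin T => μ))
    (hlim : Tendsto (fun T => ∫ y, X T y ∂(Measure.pi fun _ : Fin T => μ)) atTop (nhds 0))
    {r : ℝ} (hr : 0 < r) :
    Tendsto (fun T => (Measure.pi fun _ : Fin T => μ) {y | r ≤ X T y}) atTop (nhds 0) := by
  have h1 : Tendsto (fun T => (Measure.pi fun _ : Fin T => μ).real {y | r ≤ X T y})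
      atTop (nhds 0) := by
    refine squeeze_zero (fun _ => measureReal_nonneg)
      (g := fun T => (∫ y, X T y ∂(Measure.pi fun _ : Fin T => μ)) / r) (fun T => ?_)
      (by simpa using hlim.div_const r)
    rw [le_div_iff₀ hr, mul_comm]
    exact mul_meas_ge_le_integral_of_nonneg (ae_of_all _ (h0 T)) (hX T) r
  have h2 := (ENNReal.continuous_ofReal.tendsto 0).comp h1
  simpa [Function.comp_def, ofReal_measureReal] using h2

/-- The remainder term of the characteristic function vanishes in probability. -/
lemma tendsto_measure_remainder (hα : 1 / 3 < α) (hα1 : α ≤ 1) (hβ : 0 < β)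
    (hN : ∀ T, N T = Nat.ceil (β * (T : ℝ) ^ α)) {m : 𝓨 → ℝ} (hm : Integrable m μ)
    (hm0 : ∀ y, 0 ≤ m y) {r : ℝ} (hr : 0 < r) :
    Tendsto (fun T => (Measure.pi fun _ : Fin T => μ)
      {y | r ≤ (T : ℝ) ^ ((α - 1) / 2) / (N T : ℝ) ^ 2 * ∑ t, (1 + m (y t))}) atTop (nhds 0) := by
  have hi : Integrable (fun y => 1 + m y) μ := (integrable_const 1).add hm
  have hit : ∀ (T : ℕ) (t : Fin T), Integrable (fun y : Fin T → 𝓨 => 1 + m (y t))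
      (Measure.pi fun _ => μ) :=
    fun T t => integrable_comp_eval (μ := fun _ : Fin T => μ) (i := t) hi
  refine tendsto_measure_of_integral_tendsto_zero (fun T y => ?_) (fun T => ?_) ?_ hr
  · exact mul_nonneg (by positivity) (Finset.sum_nonneg fun t _ => by linarith [hm0 (y t)])
  · exact (integrable_finsetSum _ fun t _ => hit T t).const_mul _
  have hE0 : 0 ≤ ∫ y, (1 + m y) ∂μ := integral_nonneg fun y => by
    have := hm0 y
    show (0 : ℝ) ≤ 1 + m y
    linarith
  have hE : ∀ T : ℕ, ∫ y : Fin T → 𝓨, (T : ℝ) ^ ((α - 1) / 2) / (N T : ℝ) ^ 2 *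
      ∑ t, (1 + m (y t)) ∂(Measure.pi fun _ => μ)
      = ((T : ℝ) ^ ((α - 1) / 2) / (N T : ℝ) ^ 2 * T) * ∫ y, (1 + m y) ∂μ := fun T => by
    rw [integral_const_mul, integral_finsetSum _ fun t _ => hit T t]
    simp_rw [integral_comp_eval (μ := fun _ : Fin T => μ) hi.aestronglyMeasurable]
    simp
    ring
  simp_rw [hE]
  have hlim := ((tendsto_rpow_natCast_atTop_zero (e := (1 - 3 * α) / 2)
    (by linarith)).const_mul ((β⁻¹) ^ 2)).mul_const (∫ y, (1 + m y) ∂μ)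
  rw [mul_zero, zero_mul] at hlim
  refine squeeze_zero' (Eventually.of_forall fun T => by positivity) ?_ hlim
  filter_upwards [eventually_gt_atTop 0] with T hT
  exact mul_le_mul_of_nonneg_right (rate_bounds hα1 hβ hN T hT).2.2.1 hE0

/-- The centring error vanishes in probability. -/
lemma tendsto_measure_centring (hα : 1 / 3 < α) (hα1 : α ≤ 1) (hβ : 0 < β)
    (hN : ∀ T, N T = Nat.ceil (β * (T : ℝ) ^ α)) {v : 𝓨 → ℝ} (hv : MemLp v 2 μ)
    {r : ℝ} (hr : 0 < r) :
    Tendsto (fun T => (Measure.pi fun _ : Fin T => μ)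
      {y | r ≤ |(T : ℝ) ^ ((α - 1) / 2) / (2 * N T) * ∑ t, v (y t)
        - 1 / 2 * (T : ℝ) ^ ((1 - α) / 2) * β⁻¹ * ∫ y, v y ∂μ|}) atTop (nhds 0) := by
  have key : Tendsto (fun T => (Measure.pi fun _ : Fin T => μ)
      {y | r ^ 2 ≤ ((T : ℝ) ^ ((α - 1) / 2) / (2 * N T) * ∑ t, v (y t)
        - 1 / 2 * (T : ℝ) ^ ((1 - α) / 2) * β⁻¹ * ∫ y, v y ∂μ) ^ 2}) atTop (nhds 0) := by
    refine tendsto_measure_of_integral_tendsto_zero (fun T y => sq_nonneg _)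
      (fun T => (integral_sq_sum_pi hv T _ _).1) ?_ (by positivity)
    simp_rw [fun T => (integral_sq_sum_pi hv T ((T : ℝ) ^ ((α - 1) / 2) / (2 * N T))
      (1 / 2 * (T : ℝ) ^ ((1 - α) / 2) * β⁻¹ * ∫ y, v y ∂μ)).2, ← sub_mul, mul_pow]
    have h1 := ((tendsto_rpow_natCast_atTop_zero (e := -α) (by linarith)).const_mul
      ((β⁻¹) ^ 2)).mul_const (Var[v; μ])
    have h2 := (((tendsto_rpow_natCast_atTop_zero (e := (1 - 3 * α) / 2)
      (by linarith)).const_mul ((β⁻¹) ^ 2)).pow 2).mul_const ((∫ y, v y ∂μ) ^ 2)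
    have h3 := h1.add h2
    simp only [mul_zero, zero_mul, add_zero, ne_eq, OfNat.ofNat_ne_zero, not_false_eq_true,
      zero_pow] at h3
    refine squeeze_zero' (Eventually.of_forall fun T => ?_) ?_ h3
    · have := variance_nonneg v μ
      positivity
    filter_upwards [eventually_gt_atTop 0] with T hT
    obtain ⟨-, -, -, h4, h5⟩ := rate_bounds hα1 hβ hN T hT
    refine add_le_add (mul_le_mul_of_nonneg_right ?_ (variance_nonneg v μ))
      (mul_le_mul_of_nonneg_right ?_ (sq_nonneg _))
    · simpa only [mul_pow] using h4
    · rw [← sq_abs]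
      exact pow_le_pow_left₀ (abs_nonneg _) h5 2
  refine key.congr fun T => ?_
  congr 1
  ext y
  show r ^ 2 ≤ _ ^ 2 ↔ r ≤ |_|
  rw [← sq_abs (_ - _), pow_le_pow_iff_left₀ hr.le (abs_nonneg _) two_ne_zero]

end Rates

/-! ### Moments of the weights -/

section Moments

variable {𝓨 E : Type*} [MeasurableSpace 𝓨] [MeasurableSpace E] {ϖ : 𝓨 → E → ℝ}
  {μ : Measure 𝓨} [IsProbabilityMeasure μ] {G : Measure E} [IsProbabilityMeasure G]

lemma integrable_centred_pow_four (hϖ : Measurable (Function.uncurry ϖ)) (h0 : ∀ y u, 0 ≤ ϖ y u)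
    (h9 : Integrable (fun q : 𝓨 × E => ϖ q.1 q.2 ^ 9) (μ.prod G)) :
    Integrable (fun q : 𝓨 × E => (ϖ q.1 q.2 - 1) ^ 4) (μ.prod G) := by
  have hm : Measurable fun q : 𝓨 × E => ϖ q.1 q.2 := hϖ
  refine ((integrable_const (1 : ℝ)).add h9).mono'
    ((hm.sub_const 1).pow_const 4).aestronglyMeasurable (ae_of_all _ fun q => ?_)
  have hx := h0 q.1 q.2
  show ‖(ϖ q.1 q.2 - 1) ^ 4‖ ≤ 1 + ϖ q.1 q.2 ^ 9
  generalize ϖ q.1 q.2 = x at hx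
  rw [norm_pow, Real.norm_eq_abs]
  rcases le_total x 2 with h | h
  · have h1 : |x - 1| ^ 4 ≤ 1 := pow_le_one₀ (abs_nonneg _) (abs_le.2 ⟨by linarith, by linarith⟩)
    have : 0 ≤ x ^ 9 := by positivity
    linarith
  · have h1 : |x - 1| ^ 4 ≤ x ^ 4 :=
      pow_le_pow_left₀ (abs_nonneg _) (abs_le.2 ⟨by linarith, by linarith⟩) 4
    have h2 : x ^ 4 ≤ x ^ 9 := pow_le_pow_right₀ (by linarith) (by norm_num)
    linarith

lemma ae_good (hϖ : Measurable (Function.uncurry ϖ))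
    (h4 : Integrable (fun q : 𝓨 × E => (ϖ q.1 q.2 - 1) ^ 4) (μ.prod G))
    (h1 : ∀ᵐ y ∂μ, ∫ u, ϖ y u ∂G = 1) : ∀ᵐ y ∂μ, Good ϖ G y := by
  filter_upwards [h1, h4.prod_right_ae] with y hy hy4
  have hm : Measurable fun u => ϖ y u := hϖ.comp measurable_prodMk_left
  refine ⟨hy, (integrable_norm_rpow_iff (hm.sub_const 1).aestronglyMeasurable
    (by norm_num) (by norm_num)).1 ?_⟩
  refine hy4.norm.congr (ae_of_all _ fun u => ?_)
  have : (4 : ℝ≥0∞).toReal = ((4 : ℕ) : ℝ) := by norm_num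
  simp only [this, Real.rpow_natCast, norm_pow]

lemma integral_second_moment (hϖ : Measurable (Function.uncurry ϖ))
    (h4 : Integrable (fun q : 𝓨 × E => (ϖ q.1 q.2 - 1) ^ 4) (μ.prod G)) :
    ∫ y, ∫ u, (ϖ y u - 1) ^ 2 ∂G ∂μ = ∫ q : 𝓨 × E, (ϖ q.1 q.2 - 1) ^ 2 ∂(μ.prod G) := by
  have hm : Measurable fun q : 𝓨 × E => ϖ q.1 q.2 := hϖ
  refine (integral_prod (fun q : 𝓨 × E => (ϖ q.1 q.2 - 1) ^ 2) ?_).symm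
  refine ((integrable_const (1 : ℝ)).add h4).mono'
    ((hm.sub_const 1).pow_const 2).aestronglyMeasurable (ae_of_all _ fun q => ?_)
  show ‖(ϖ q.1 q.2 - 1) ^ 2‖ ≤ 1 + (ϖ q.1 q.2 - 1) ^ 4
  rw [Real.norm_of_nonneg (sq_nonneg _)]
  nlinarith [sq_nonneg ((ϖ q.1 q.2 - 1) ^ 2 - 1), sq_nonneg (ϖ q.1 q.2 - 1)]

omit [IsProbabilityMeasure μ] in
lemma memLp_second_moment (hϖ : Measurable (Function.uncurry ϖ))
    (h : Integrable (fun y => (∫ u, (ϖ y u - 1) ^ 2 ∂G) ^ 2) μ) :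
    MemLp (fun y => ∫ u, (ϖ y u - 1) ^ 2 ∂G) 2 μ := by
  have hm : Measurable fun q : 𝓨 × E => (ϖ q.1 q.2 - 1) ^ 2 :=
    (Measurable.sub_const (show Measurable fun q : 𝓨 × E => ϖ q.1 q.2 from hϖ) 1).pow_const 2
  exact (memLp_two_iff_integrable_sq
    (hm.stronglyMeasurable.integral_prod_right'.aestronglyMeasurable)).2 h

end Moments

/-! ### Conditional expectation under the tilted measure -/

section Conditioning

variable {Ω A B : Type*} {mΩ : MeasurableSpace Ω} [MeasurableSpace A] [MeasurableSpace B]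
  {P : Measure Ω} [IsProbabilityMeasure P] {X : Ω → A} {W : Ω → B} {ρ : Measure A} {σ : Measure B}
  [IsProbabilityMeasure ρ] [IsProbabilityMeasure σ] {D : A × B → ℝ}

omit [IsProbabilityMeasure P] [IsProbabilityMeasure ρ] [IsProbabilityMeasure σ] in
lemma map_withDensity_comp (hX : Measurable X) (hW : Measurable W)
    (hlaw : P.map (fun ω => (X ω, W ω)) = ρ.prod σ) (hD : Measurable D) :
    (P.withDensity fun ω => ENNReal.ofReal (D (X ω, W ω))).map (fun ω => (X ω, W ω))
      = (ρ.prod σ).withDensity fun q => ENNReal.ofReal (D q) := by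
  have hXW : Measurable fun ω => (X ω, W ω) := hX.prodMk hW
  ext s hs
  rw [Measure.map_apply hXW hs, withDensity_apply _ (hXW hs), withDensity_apply _ hs, ← hlaw,
    setLIntegral_map hs hD.ennreal_ofReal hXW]

lemma integrable_density (hD : Measurable D) (hD0 : ∀ q, 0 ≤ D q)
    (hDi : ∀ᵐ x ∂ρ, Integrable (fun w => D (x, w)) σ) (hD1 : ∀ᵐ x ∂ρ, ∫ w, D (x, w) ∂σ = 1) :
    Integrable D (ρ.prod σ) := by
  refine (integrable_prod_iff hD.aestronglyMeasurable).2 ⟨hDi, ?_⟩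
  refine (integrable_const (1 : ℝ)).congr ?_
  filter_upwards [hD1] with x hx
  simp_rw [Real.norm_of_nonneg (hD0 _)]
  exact hx.symm

omit [IsProbabilityMeasure P] in
/-- Tilting by a density with unit conditional means leaves the law of the conditioning variable
unchanged. -/
lemma map_withDensity_fst (hX : Measurable X) (hW : Measurable W)
    (hlaw : P.map (fun ω => (X ω, W ω)) = ρ.prod σ) (hD : Measurable D) (hD0 : ∀ q, 0 ≤ D q)
    (hDi : ∀ᵐ x ∂ρ, Integrable (fun w => D (x, w)) σ) (hD1 : ∀ᵐ x ∂ρ, ∫ w, D (x, w) ∂σ = 1) :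
    (P.withDensity fun ω => ENNReal.ofReal (D (X ω, W ω))).map X = ρ := by
  have e : (P.withDensity fun ω => ENNReal.ofReal (D (X ω, W ω))).map X
      = ((P.withDensity fun ω => ENNReal.ofReal (D (X ω, W ω))).map
          (fun ω => (X ω, W ω))).map Prod.fst := by
    rw [Measure.map_map measurable_fst (hX.prodMk hW)]; rfl
  rw [e, map_withDensity_comp hX hW hlaw hD]
  ext s hs
  have hs' : (Prod.fst ⁻¹' s : Set (A × B)) = s ×ˢ Set.univ := by ext; simp
  rw [Measure.map_apply measurable_fst hs, withDensity_apply _ (measurable_fst hs), hs',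
    setLIntegral_prod _ hD.ennreal_ofReal.aemeasurable]
  have : ∀ᵐ x ∂ρ, ∫⁻ w in Set.univ, ENNReal.ofReal (D (x, w)) ∂σ = 1 := by
    filter_upwards [hDi, hD1] with x hxi hx1
    rw [Measure.restrict_univ, ← ofReal_integral_eq_lintegral_ofReal hxi
      (ae_of_all _ fun w => hD0 _), hx1, ENNReal.ofReal_one]
  rw [lintegral_congr_ae (ae_restrict_of_ae this)]
  simp

omit [IsProbabilityMeasure P] in
/-- Bayes' formula: under the tilted measure, the conditional expectation given `X` is obtained by
integrating the other variable out against the density. -/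
lemma condExp_withDensity (hX : Measurable X) (hW : Measurable W)
    (hlaw : P.map (fun ω => (X ω, W ω)) = ρ.prod σ) (hD : Measurable D) (hD0 : ∀ q, 0 ≤ D q)
    (hDi : ∀ᵐ x ∂ρ, Integrable (fun w => D (x, w)) σ) (hD1 : ∀ᵐ x ∂ρ, ∫ w, D (x, w) ∂σ = 1)
    {h : A × B → ℝ} (hh : Measurable h) {C : ℝ} (hC : ∀ q, ‖h q‖ ≤ C) :
    (fun ω => ∫ w, D (X ω, w) * h (X ω, w) ∂σ)
      =ᵐ[P.withDensity fun ω => ENNReal.ofReal (D (X ω, W ω))]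
    (P.withDensity fun ω => ENNReal.ofReal (D (X ω, W ω)))[fun ω => h (X ω, W ω) |
      MeasurableSpace.comap X inferInstance] := by
  set Q := P.withDensity fun ω => ENNReal.ofReal (D (X ω, W ω)) with hQ
  have hXW : Measurable fun ω => (X ω, W ω) := hX.prodMk hW
  have hQX : Q.map X = ρ := map_withDensity_fst hX hW hlaw hD hD0 hDi hD1
  have hQprob : IsProbabilityMeasure Q := by
    refine ⟨?_⟩
    have := hQX ▸ Measure.map_apply (μ := Q) hX MeasurableSet.univ
    simpa using this.symm
  have hDh : Integrable (fun q => D q * h q) (ρ.prod σ) :=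
    (integrable_density hD hD0 hDi hD1).mul_bdd hh.aestronglyMeasurable (ae_of_all _ hC)
  have hk : StronglyMeasurable fun x => ∫ w, D (x, w) * h (x, w) ∂σ :=
    (hD.mul hh).stronglyMeasurable.integral_prod_right'
  have hki : Integrable (fun x => ∫ w, D (x, w) * h (x, w) ∂σ) ρ := hDh.integral_prod_left
  have hki' : Integrable (fun ω => ∫ w, D (X ω, w) * h (X ω, w) ∂σ) Q := by
    rw [← hQX] at hki
    exact hki.comp_measurable hX
  refine ae_eq_condExp_of_forall_setIntegral_eq hX.comap_le ?_ (fun s _ _ => hki'.integrableOn) ?_ ?_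
  · exact (integrable_const C).mono' (hh.comp hXW).aestronglyMeasurable
      (ae_of_all _ fun ω => hC _)
  · rintro _ ⟨s, hs, rfl⟩ -
    have e1 : ∫ ω in X ⁻¹' s, (∫ w, D (X ω, w) * h (X ω, w) ∂σ) ∂Q
        = ∫ x in s, (∫ w, D (x, w) * h (x, w) ∂σ) ∂ρ := by
      rw [← hQX, setIntegral_map hs hk.aestronglyMeasurable hX.aemeasurable]
    have e2 : ∫ ω in X ⁻¹' s, h (X ω, W ω) ∂Q
        = ∫ q in s ×ˢ Set.univ, D q * h q ∂(ρ.prod σ) := by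
      have h1 := setIntegral_map (μ := Q) (f := h) (hs.prod MeasurableSet.univ)
        hh.aestronglyMeasurable hXW.aemeasurable
      have h2 : (fun ω => (X ω, W ω)) ⁻¹' (s ×ˢ Set.univ) = X ⁻¹' s := by ext; simp
      rw [h2] at h1
      rw [← h1, hQ, map_withDensity_comp hX hW hlaw hD,
        setIntegral_withDensity_eq_setIntegral_toReal_smul hD.ennreal_ofReal
          (ae_of_all _ fun _ => ENNReal.ofReal_lt_top) _ (hs.prod MeasurableSet.univ)]
      simp_rw [ENNReal.toReal_ofReal (hD0 _), smul_eq_mul]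
    rw [e1, e2, setIntegral_prod _ hDh.integrableOn]
    simp
  · exact (hk.comp_measurable (comap_measurable X)).aestronglyMeasurable

end Conditioning

/-! ### The conditional central limit theorem -/

/-- Theorem 1, part 2, of the paper.  In the importance-sampling random
effects setup, with `N_T = ⌈β T^α⌉`, `1/3 < α ≤ 1`, `β > 0`, suppose
`E[ϖ(Y₁,U₁₁)⁹] < ∞` and `E[γ(Y₁)⁴] < ∞`.  Let `P̃_T` be the tilted (equilibrium)
measure `dP̃_T/dP = ∏_{t≤T} Ŵ^T_t` where `Ŵ^T_t = N_T⁻¹ Σ_i ϖ(Y_t, U^T_{t,i})`.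
Then, under `P̃_T`,
`T^{(α−1)/2} Z_T − ½ T^{(1−α)/2} β⁻¹ γ² | 𝒴^T ⇒ N(0, β⁻¹γ²)`: for every bounded
continuous `f`, the `P̃_T`-conditional expectation of `f` of this quantity given `𝒴^T`
converges in `P̃_T`-probability to `∫ f dN(0, β⁻¹γ²)`. -/
theorem stmt1
    {Ω : Type*} [MeasurableSpace Ω] (P : Measure Ω) [IsProbabilityMeasure P]
    {𝓨 : Type*} [MeasurableSpace 𝓨] (μ : Measure 𝓨) [IsProbabilityMeasure μ]
    (p : ℕ) (α β : ℝ) (hα : 1 / 3 < α) (hα1 : α ≤ 1) (hβ : 0 < β)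
    (N : ℕ → ℕ) (hN : ∀ T, N T = Nat.ceil (β * (T : ℝ) ^ α))
    (Y : ℕ → Ω → 𝓨) (hYmeas : ∀ t, Measurable (Y t))
    (U : (T : ℕ) → Fin T → Fin (N T) → Ω → Fin p → ℝ)
    (hUmeas : ∀ T t i, Measurable (U T t i))
    (ϖ : 𝓨 → (Fin p → ℝ) → ℝ)
    (hϖmeas : Measurable (Function.uncurry ϖ))
    (hϖnonneg : ∀ y u, 0 ≤ ϖ y u)
    (hϖmean : ∀ᵐ y ∂μ, (∫ u, ϖ y u ∂(stdGaussianPi p)) = 1)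
    (hlaw : ∀ T, Measure.map
        (fun ω => ((fun t : Fin T => Y ↑t ω),
          fun ti : Fin T × Fin (N T) => U T ti.1 ti.2 ω)) P
      = (Measure.pi fun _ : Fin T => μ).prod
          (Measure.pi fun _ : Fin T × Fin (N T) => stdGaussianPi p))
    (hmom9 : Integrable (fun yu : 𝓨 × (Fin p → ℝ) => ϖ yu.1 yu.2 ^ 9)
      (μ.prod (stdGaussianPi p)))
    (hmomγ4 : Integrable (fun y => (∫ u, (ϖ y u - 1) ^ 2 ∂(stdGaussianPi p)) ^ 2) μ)
    (gammaSq : ℝ)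
    (hgammaSq : gammaSq
      = ∫ yu : 𝓨 × (Fin p → ℝ), (ϖ yu.1 yu.2 - 1) ^ 2 ∂(μ.prod (stdGaussianPi p)))
    (Z : ℕ → Ω → ℝ)
    (hZ : ∀ T ω, Z T ω = ∑ t : Fin T,
      Real.log ((N T : ℝ)⁻¹ * ∑ i : Fin (N T), ϖ (Y ↑t ω) (U T t i ω)))
    (Ptilde : ℕ → Measure Ω)
    (hPtilde : ∀ T, Ptilde T = P.withDensity fun ω =>
      ENNReal.ofReal (∏ t : Fin T, ((N T : ℝ)⁻¹ * ∑ i : Fin (N T), ϖ (Y ↑t ω) (U T t i ω))))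
    (𝒴 : ℕ → MeasurableSpace Ω)
    (h𝒴 : ∀ T, 𝒴 T = ⨆ t : Fin T, MeasurableSpace.comap (Y ↑t) inferInstance) :
    ∀ f : BoundedContinuousFunction ℝ ℝ, ∀ ε : ℝ, 0 < ε →
      Tendsto (fun T => Ptilde T {ω | ε ≤
        dist (((Ptilde T)[(fun ω' => f ((T : ℝ) ^ ((α - 1) / 2) * Z T ω'
            - 1 / 2 * (T : ℝ) ^ ((1 - α) / 2) * β⁻¹ * gammaSq)) | 𝒴 T]) ω)
          (∫ x, f x ∂(gaussianReal 0 (Real.toNNReal (β⁻¹ * gammaSq))))})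
        atTop (nhds 0) := by
  intro f ε hε
  have : IsProbabilityMeasure (stdGaussianPi p) := by unfold stdGaussianPi; infer_instance
  set G := stdGaussianPi p with hG
  have h4 := integrable_centred_pow_four hϖmeas hϖnonneg hmom9
  have hgood : ∀ᵐ y ∂μ, Good ϖ G y := ae_good hϖmeas h4 hϖmean
  have hv := memLp_second_moment hϖmeas hmomγ4
  have hEv : ∫ y, ∫ u, (ϖ y u - 1) ^ 2 ∂G ∂μ = gammaSq :=
    (integral_second_moment hϖmeas h4).trans hgammaSq.symm
  have hg0 : 0 ≤ β⁻¹ * gammaSq := by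
    rw [hgammaSq]
    exact mul_nonneg (by positivity) (integral_nonneg fun q => sq_nonneg _)
  obtain ⟨r, hr, hclose⟩ := integral_close_of_charFun_close f hg0 hε
  have hS := tendsto_measure_remainder (μ := μ) hα hα1 hβ hN h4.integral_prod_left
    (fun y => integral_nonneg fun u => by positivity) hr
  have hδ := tendsto_measure_centring hα hα1 hβ hN hv hr
  rw [hEv] at hδ
  have hsum := hS.add hδ
  rw [add_zero] at hsum
  refine tendsto_of_tendsto_of_tendsto_of_le_of_le' tendsto_const_nhds hsum
    (Eventually.of_forall fun _ => zero_le) ?_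
  filter_upwards [eventually_gt_atTop 0] with T hT
  have hn : 0 < N T := (rate_bounds hα1 hβ hN T hT).1
  have ha1 : (T : ℝ) ^ ((α - 1) / 2) ≤ 1 := (rate_bounds hα1 hβ hN T hT).2.1
  have hab : (T : ℝ) ^ ((α - 1) / 2) * (1 / 2 * (T : ℝ) ^ ((1 - α) / 2) * β⁻¹ * gammaSq)
      = β⁻¹ * gammaSq / 2 := by
    have hT0 : (0 : ℝ) < T := by exact_mod_cast hT
    have : (T : ℝ) ^ ((α - 1) / 2) * (T : ℝ) ^ ((1 - α) / 2) = 1 := by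
      rw [← Real.rpow_add hT0, show (α - 1) / 2 + (1 - α) / 2 = 0 by ring, Real.rpow_zero]
    linear_combination (1 / 2 * β⁻¹ * gammaSq) * this
  set a := (T : ℝ) ^ ((α - 1) / 2) with ha
  set b := 1 / 2 * (T : ℝ) ^ ((1 - α) / 2) * β⁻¹ * gammaSq with hb
  have ha0 : 0 ≤ a := by positivity
  set X : Ω → Fin T → 𝓨 := fun ω t => Y t ω with hX
  set W : Ω → Fin T × Fin (N T) → Fin p → ℝ := fun ω ti => U T ti.1 ti.2 ω with hW
  have hXm : Measurable X := measurable_pi_lambda _ fun t => hYmeas t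
  have hWm : Measurable W := measurable_pi_lambda _ fun ti => hUmeas T ti.1 ti.2
  let D : (Fin T → 𝓨) × (Fin T × Fin (N T) → Fin p → ℝ) → ℝ := fun q => tiltDensity ϖ q.1 q.2
  let h : (Fin T → 𝓨) × (Fin T × Fin (N T) → Fin p → ℝ) → ℝ :=
    fun q => f (a * logErr ϖ q.1 q.2 - b)
  have hDm : Measurable D := measurable_tiltDensity hϖmeas
  have hD0 : ∀ q, 0 ≤ D q := fun q => tiltDensity_nonneg hϖnonneg q.1 q.2
  have hhm : Measurable h :=
    f.continuous.measurable.comp (((measurable_logErr hϖmeas).const_mul a).sub_const b)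
  have hgoodT : ∀ᵐ y ∂(Measure.pi fun _ : Fin T => μ), ∀ t, Good ϖ G (y t) :=
    eventually_all.2 fun t =>
      (Measure.tendsto_eval_ae_ae (μ := fun _ : Fin T => μ) (i := t)).eventually hgood
  have hDi : ∀ᵐ y ∂(Measure.pi fun _ : Fin T => μ),
      Integrable (fun u => D (y, u)) (Measure.pi fun _ => G) := by
    filter_upwards [hgoodT] with y hy
    exact integrable_tiltDensity fun t => (hy t).integrable
  have hD1 : ∀ᵐ y ∂(Measure.pi fun _ : Fin T => μ),
      ∫ u, D (y, u) ∂(Measure.pi fun _ => G) = 1 := by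
    filter_upwards [hgoodT] with y hy
    exact integral_tiltDensity (fun t => (hy t).integrable) (fun t => (hy t).1) hn
  have hQ : Ptilde T = P.withDensity fun ω => ENNReal.ofReal (D (X ω, W ω)) := hPtilde T
  have hQX : (Ptilde T).map X = Measure.pi fun _ => μ := by
    rw [hQ]; exact map_withDensity_fst hXm hWm (hlaw T) hDm hD0 hDi hD1
  have h𝒴T : 𝒴 T = MeasurableSpace.comap X inferInstance := by
    rw [h𝒴 T]; exact (MeasurableSpace.comap_process_pi fun (t : Fin T) => Y t).symm
  have hcond : (fun ω => ∫ x, f x ∂(tiltLaw ϖ G T (N T) a b (X ω))) =ᵐ[Ptilde T]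
      (Ptilde T)[(fun ω' => f (a * Z T ω' - b)) | 𝒴 T] := by
    have hZh : (fun ω' => f (a * Z T ω' - b)) = fun ω => h (X ω, W ω) := by
      funext ω
      rw [hZ T ω]
      rfl
    have := condExp_withDensity hXm hWm (hlaw T) hDm hD0 hDi hD1 hhm (C := ‖f‖)
      fun q => f.norm_coe_le_norm _
    rw [h𝒴T, hZh, hQ]
    refine EventuallyEq.trans (ae_of_all _ fun ω => ?_) this
    exact integral_tiltLaw hϖmeas hϖnonneg a b (X ω) f.continuous.stronglyMeasurable
  -- off the sets where `S` or `δ` is large, the conditional law is close to the Gaussian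
  have hae : {ω | ε ≤ dist (((Ptilde T)[(fun ω' => f (a * Z T ω' - b)) | 𝒴 T]) ω)
      (∫ x, f x ∂(gaussianReal 0 (Real.toNNReal (β⁻¹ * gammaSq))))} ≤ᵐ[Ptilde T]
      (X ⁻¹' {y | r ≤ a / (N T : ℝ) ^ 2 * ∑ t, (1 + ∫ u, (ϖ (y t) u - 1) ^ 4 ∂G)} ∪
        X ⁻¹' {y | r ≤ |a / (2 * N T) * ∑ t, ∫ u, (ϖ (y t) u - 1) ^ 2 ∂G - b|} : Set Ω) := by
    have hgoodX : ∀ᵐ ω ∂(Ptilde T), ∀ t, Good ϖ G (X ω t) :=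
      ae_of_ae_map hXm.aemeasurable (hQX ▸ hgoodT)
    filter_upwards [hcond, hgoodX] with ω hω hgω hbad
    by_contra hcon
    replace hcon := not_or.1 (show ¬ (r ≤ _ ∨ r ≤ |_|) from hcon)
    rw [not_le, not_le] at hcon
    have hbad' : ε ≤ dist (((Ptilde T)[(fun ω' => f (a * Z T ω' - b)) | 𝒴 T]) ω)
      (∫ x, f x ∂(gaussianReal 0 (Real.toNNReal (β⁻¹ * gammaSq)))) := hbad
    rw [← hω, Real.dist_eq] at hbad'
    have hS0 : 0 ≤ a / (N T : ℝ) ^ 2 * ∑ t, (1 + ∫ u, (ϖ (X ω t) u - 1) ^ 4 ∂G) :=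
      mul_nonneg (by positivity) (Finset.sum_nonneg fun t _ =>
        add_nonneg zero_le_one (integral_nonneg fun u => by positivity))
    refine not_lt.2 hbad' (hclose _ ?_ _ _ a ha0 ha1 (by rw [abs_of_nonneg hS0]; exact hcon.1.le)
      hcon.2.le fun s => charFun_tiltLaw_sub_le hϖmeas hϖnonneg ha0 ha1 hab hgω hn rfl s)
    exact isProbabilityMeasure_tiltLaw hϖmeas hϖnonneg a b (fun t => (hgω t).integrable)
      (fun t => (hgω t).1) hn
  refine (measure_mono_ae hae).trans ((measure_union_le _ _).trans (add_le_add ?_ ?_))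
  · rw [← hQX]
    exact Measure.le_map_apply hXm.aemeasurable _
  · rw [← hQX]
    exact Measure.le_map_apply hXm.aemeasurable _
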